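/- Let σ > 1 and let f: ℝ → ℝ be 1-periodic, symmetric in the sense f(t) = f(1−t), and α-Hölder continuous for some 0 < α ≤ 1. Then there exist real constants D and K > 0 such that for all sufficiently large n, | (1/F_n^σ) Σ_{m=1}^{F_n−1} f(m/F_n)/|sin(πm/F_n)|^σ · f(F_{n−1}m/F_n)/|sin(πF_{n−1}m/F_n)|^σ − C·n − D | ≤ K · n² / φ^{min{α, σ−1}·n/2}, where C = 2 f(0)² 5^{σ/2} π^{−2σ} Σ_{i=1}^∞ η_i^{−σ}. -/

import Mathlib

open Real

noncomputable def phi : ℝ := (1 + Real.sqrt 5) / 2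

noncomputable def W (i : ℕ) : ℕ → ℤ
  | 0 => ⌊phi ^ 2 * (⌊phi * i⌋ : ℝ)⌋ - ⌊phi * (⌊phi * i⌋ : ℝ)⌋
  | 1 => ⌊phi * (⌊phi * i⌋ : ℝ)⌋
  | 2 => ⌊phi ^ 2 * (⌊phi * i⌋ : ℝ)⌋
  | (k + 3) => W i (k + 2) + W i (k + 1)

noncomputable def wplus (i : ℕ) : ℝ := phi⁻¹ ^ 2 * (W i 1 : ℝ) + phi⁻¹ * (W i 2 : ℝ)

noncomputable def wminus (i : ℕ) : ℝ := phi ^ 2 * (W i 1 : ℝ) - phi * (W i 2 : ℝ)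

noncomputable def eta (i : ℕ) : ℝ := -(wplus i * wminus i)

/-!
With a trapezoidal partition of unity on `ℝ / ℤ`, the normalized sum over the points of the
Fibonacci lattice unfolds, up to a constant factor, to the sum over `ℤ² ≅ ℤ[φ]` of
`h (X / T) * h (Y / T) * |X * Y / T| ^ (-σ)`. Here `h` is compactly supported and Hölder continuous,
`T = φ ^ n - ψ ^ n = √5 F_n`, and, in terms of the conjugate embeddings `a` and `b` of a lattice
point, `X = a + b` and `Y = φ ^ n a + ψ ^ n b`.

On the box `|a| < 1`, `|b| < φ ^ n` the summand is close to the main term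
`h a * h (ψ ^ n b) * |a b| ^ (-σ)`. The parts of the difference that are not small come from points
near the edges of the box; they do not depend on `n` up to the symmetry of the box, and hence add
only a constant.

The nonzero lattice points are `± φ ^ k` times the points given by the rows of the Wythoff array,
and `|a b| = η_i` along the `i`-th orbit. Each orbit meets the box in `O(n)` points, which bounds
the remainders. Passing from `n` to `n + 1` in the main term gives a sum that telescopes along each
orbit to `2 h(0)² η_i ^ (-σ)`, up to a geometrically small error. This gives the slope `C`, and the
accumulated errors converge to the contribution of the main term to `D`.
-/

section

open Filter Set
open scoped goldenRatio Topology

/-! ### The lattice `ℤ²` as `ℤ[φ]`, and its golden orbits -/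

lemma inv_goldenRatio_pos : 0 < φ⁻¹ := inv_pos.2 goldenRatio_pos

lemma inv_goldenRatio_lt_one : φ⁻¹ < 1 := inv_lt_one_of_one_lt₀ one_lt_goldenRatio

lemma goldenRatio_eq_inv_add_one : φ = φ⁻¹ + 1 := by
  linarith [inv_goldenRatio, goldenRatio_add_goldenConj]

lemma goldenConj_eq_neg_inv : ψ = -φ⁻¹ := by rw [inv_goldenRatio, neg_neg]

lemma abs_goldenConj : |ψ| = φ⁻¹ := by
  rw [goldenConj_eq_neg_inv, abs_neg, abs_of_pos inv_goldenRatio_pos]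

lemma exists_goldenConj_zpow_mul_mem_Ioc_of_neg {x : ℝ} (hx : x < 0) :
    ∃ k : ℤ, ψ ^ k * x ∈ Ioc (-φ) (-φ⁻¹) := by
  have hφ := goldenRatio_pos
  have hsq : (φ ^ 2)⁻¹ = ψ ^ 2 := by rw [goldenConj_eq_neg_inv, neg_sq, inv_pow]
  obtain ⟨m, hm, hm'⟩ := exists_mem_Ico_zpow (mul_pos (neg_pos.2 hx) hφ)
    (one_lt_pow₀ one_lt_goldenRatio two_ne_zero)
  have hpos : 0 < (φ ^ 2) ^ m := by positivity
  refine ⟨2 * m, ?_⟩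
  rw [zpow_mul, zpow_ofNat, ← hsq, inv_zpow, mem_Ioc, ← div_eq_inv_mul, lt_div_iff₀ hpos,
    div_le_iff₀ hpos]
  rw [zpow_add_one₀ (by positivity)] at hm'
  constructor
  · refine lt_of_mul_lt_mul_right (a := φ) ?_ hφ.le
    linear_combination hm'
  · refine le_of_mul_le_mul_right (a := φ) ?_ hφ
    linear_combination hm + (φ ^ 2) ^ m * inv_mul_cancel₀ hφ.ne'

lemma eq_zero_of_goldenConj_zpow_mul_mem_Ioc {x : ℝ} (hx : x ∈ Ioc (-φ) (-φ⁻¹)) {k : ℤ}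
    (hk : ψ ^ k * x ∈ Ioc (-φ) (-φ⁻¹)) : k = 0 := by
  have hφ := goldenRatio_pos
  have hφ' := inv_goldenRatio_pos
  have heven : Even k := by
    by_contra hodd
    have hneg := (Int.not_even_iff_odd.1 hodd).zpow_neg_iff.2 goldenConj_neg
    linarith [mul_pos_of_neg_of_neg hneg (hx.2.trans_lt (neg_lt_zero.2 hφ')), hk.2]
  have habs : ψ ^ k = φ ^ (-k) := by
    rw [← heven.zpow_abs, abs_goldenConj, inv_zpow']
  rw [habs] at hk
  have hlt : φ ^ (-k) < φ ^ (2 : ℤ) := by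
    refine lt_of_mul_lt_mul_right (a := φ⁻¹) ?_ hφ'.le
    calc φ ^ (-k) * φ⁻¹ ≤ φ ^ (-k) * -x := by gcongr; linarith [hx.2]
      _ < φ := by linarith [hk.1]
      _ = φ ^ (2 : ℤ) * φ⁻¹ := by field_simp
  have hgt : φ ^ (-2 : ℤ) < φ ^ (-k) := by
    refine lt_of_mul_lt_mul_right (a := φ) ?_ hφ.le
    calc φ ^ (-2 : ℤ) * φ = φ⁻¹ := by field_simp
      _ ≤ φ ^ (-k) * -x := by linarith [hk.2]
      _ < φ ^ (-k) * φ := by gcongr; linarith [hx.1]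
  rw [zpow_lt_zpow_iff_right₀ one_lt_goldenRatio] at hlt hgt
  obtain ⟨j, rfl⟩ := heven
  omega

lemma exists_goldenConj_zpow_mul_mem_Ioc {x : ℝ} (hx : x ≠ 0) :
    ∃ k : ℤ, ψ ^ k * x ∈ Ioc (-φ) (-φ⁻¹) := by
  rcases hx.lt_or_gt with hneg | hpos
  · exact exists_goldenConj_zpow_mul_mem_Ioc_of_neg hneg
  · obtain ⟨k, hk⟩ :=
      exists_goldenConj_zpow_mul_mem_Ioc_of_neg (mul_neg_of_neg_of_pos goldenConj_neg hpos)
    exact ⟨k + 1, by rwa [zpow_add_one₀ goldenConj_ne_zero, mul_assoc]⟩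

/-- The coordinate on `ℤ × ℤ` that multiplication by the golden ratio expands. Identifying `l`
with `l.2 + l.1 * φ - l.1` in `ℤ[φ]`, it is the standard real embedding. -/
noncomputable def coordU : ℤ × ℤ →+ ℝ where
  toFun l := l.2 - l.1 * ψ
  map_zero' := by simp
  map_add' l l' := by push_cast [Prod.fst_add, Prod.snd_add]; ring

/-- The coordinate on `ℤ × ℤ` that multiplication by the golden ratio contracts: the conjugate
real embedding, with its sign reversed so that `coordU l + coordS l = √5 * l.1`. -/
noncomputable def coordS : ℤ × ℤ →+ ℝ where
  toFun l := l.1 * φ - l.2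
  map_zero' := by simp
  map_add' l l' := by push_cast [Prod.fst_add, Prod.snd_add]; ring

lemma coordU_apply (l : ℤ × ℤ) : coordU l = l.2 - l.1 * ψ := rfl

lemma coordS_apply (l : ℤ × ℤ) : coordS l = l.1 * φ - l.2 := rfl

lemma coordU_add_coordS (l : ℤ × ℤ) : coordU l + coordS l = √5 * l.1 := by
  rw [coordU_apply, coordS_apply]
  linear_combination (l.1 : ℝ) * goldenRatio_sub_goldenConj

/-- Multiplication by the golden ratio on `ℤ × ℤ`, in the coordinates of `coordU`. -/
def mulPhi : Equiv.Perm (ℤ × ℤ) where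
  toFun l := (l.2, l.1 + l.2)
  invFun l := (l.2 - l.1, l.1)
  left_inv l := by ext <;> simp
  right_inv l := by ext <;> simp

/-- The involution of `ℤ × ℤ` that exchanges the two coordinates up to sign. -/
def conjSwap : Equiv.Perm (ℤ × ℤ) where
  toFun l := (-l.1, l.2 - l.1)
  invFun l := (-l.1, l.2 - l.1)
  left_inv l := by ext <;> simp
  right_inv l := by ext <;> simp

lemma coordU_mulPhi (l : ℤ × ℤ) : coordU (mulPhi l) = φ * coordU l := by
  simp only [coordU_apply, mulPhi, Equiv.coe_fn_mk]
  push_cast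
  linear_combination (l.1 : ℝ) * goldenRatio_mul_goldenConj -
    (l.2 : ℝ) * goldenRatio_add_goldenConj

lemma coordS_mulPhi (l : ℤ × ℤ) : coordS (mulPhi l) = ψ * coordS l := by
  simp only [coordS_apply, mulPhi, Equiv.coe_fn_mk]
  push_cast
  linear_combination (-(l.1 : ℝ)) * goldenRatio_mul_goldenConj +
    (l.2 : ℝ) * goldenRatio_add_goldenConj

lemma coordU_conjSwap (l : ℤ × ℤ) : coordU (conjSwap l) = -coordS l := by
  simp only [coordU_apply, coordS_apply, conjSwap, Equiv.coe_fn_mk]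
  push_cast
  linear_combination (l.1 : ℝ) * goldenRatio_add_goldenConj

lemma coordS_conjSwap (l : ℤ × ℤ) : coordS (conjSwap l) = -coordU l := by
  simp only [coordU_apply, coordS_apply, conjSwap, Equiv.coe_fn_mk]
  push_cast
  linear_combination (-(l.1 : ℝ)) * goldenRatio_add_goldenConj

lemma perm_zpow_apply_of_semiconj {X G₀ : Type*} [GroupWithZero G₀] {T : Equiv.Perm X} {a : X → G₀}
    {c : G₀} (hc : c ≠ 0) (h : ∀ x, a (T x) = c * a x) (k : ℤ) (x : X) :
    a ((T ^ k) x) = c ^ k * a x := by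
  induction k generalizing x with
  | zero => simp
  | succ n ih => rw [zpow_add_one, Equiv.Perm.mul_apply, ih, h, zpow_add_one₀ hc, mul_assoc]
  | pred n ih =>
    have hinv : a (T⁻¹ x) = c⁻¹ * a x := by
      rw [eq_inv_mul_iff_mul_eq₀ hc, ← h, ← Equiv.Perm.mul_apply, mul_inv_cancel,
        Equiv.Perm.one_apply]
    rw [zpow_sub_one, Equiv.Perm.mul_apply, ih, hinv, zpow_sub_one₀ hc, mul_assoc]

lemma coordU_mulPhi_zpow (k : ℤ) (l : ℤ × ℤ) : coordU ((mulPhi ^ k) l) = φ ^ k * coordU l :=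
  perm_zpow_apply_of_semiconj goldenRatio_ne_zero coordU_mulPhi k l

lemma coordS_mulPhi_zpow (k : ℤ) (l : ℤ × ℤ) : coordS ((mulPhi ^ k) l) = ψ ^ k * coordS l :=
  perm_zpow_apply_of_semiconj goldenConj_ne_zero coordS_mulPhi k l

lemma coordU_injective : Function.Injective coordU := by
  refine (injective_iff_map_eq_zero coordU).2 fun l hl => ?_
  rw [coordU_apply, sub_eq_zero] at hl
  have hfst : l.1 = 0 := by
    by_contra h
    exact goldenConj_irrational.intCast_mul h ⟨l.2, by exact_mod_cast hl⟩
  exact Prod.ext hfst (by simpa [hfst] using hl)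

lemma coordS_injective : Function.Injective coordS := by
  intro l m h
  rw [← conjSwap.injective.eq_iff]
  exact coordU_injective (by rw [coordU_conjSwap, coordU_conjSwap, h])

/-- The absolute value of the norm from `ℤ[φ]` to `ℤ`, as a real number. -/
noncomputable def absNorm (l : ℤ × ℤ) : ℝ := |coordU l * coordS l|

lemma absNorm_eq_mul (l : ℤ × ℤ) : absNorm l = |coordU l| * |coordS l| := abs_mul _ _

lemma absNorm_nonneg (l : ℤ × ℤ) : 0 ≤ absNorm l := abs_nonneg _

lemma absNorm_conjSwap (l : ℤ × ℤ) : absNorm (conjSwap l) = absNorm l := by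
  rw [absNorm_eq_mul, absNorm_eq_mul, coordU_conjSwap, coordS_conjSwap, abs_neg, abs_neg, mul_comm]

lemma absNorm_mulPhi_zpow (k : ℤ) (l : ℤ × ℤ) : absNorm ((mulPhi ^ k) l) = absNorm l := by
  rw [absNorm, absNorm, coordU_mulPhi_zpow, coordS_mulPhi_zpow, mul_mul_mul_comm, ← mul_zpow,
    goldenRatio_mul_goldenConj, abs_mul, abs_neg_one_zpow, one_mul]

lemma one_le_absNorm {l : ℤ × ℤ} (hl : l ≠ 0) : 1 ≤ absNorm l := by
  have hne : coordU l * coordS l ≠ 0 := mul_ne_zero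
    ((map_ne_zero_iff _ coordU_injective).2 hl) ((map_ne_zero_iff _ coordS_injective).2 hl)
  have hint : coordU l * coordS l = ((l.1 * l.1 + l.1 * l.2 - l.2 * l.2 : ℤ) : ℝ) := by
    rw [coordU_apply, coordS_apply]
    push_cast
    linear_combination (-(l.1 : ℝ) ^ 2) * goldenRatio_mul_goldenConj +
      (l.1 : ℝ) * l.2 * goldenRatio_add_goldenConj
  rw [absNorm, hint]
  rw [hint] at hne
  exact_mod_cast Int.one_le_abs (Int.cast_ne_zero.1 hne)

/-- The lattice point of norm `eta (i + 1)` that generates the row `i + 1` of the Wythoff array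
under multiplication by the golden ratio. -/
noncomputable def wythoffPoint (i : ℕ) : ℤ × ℤ := (i, ⌊((i : ℝ) + 1) * φ⌋)

lemma intCast_mul_goldenRatio_ne_intCast {m : ℤ} (hm : m ≠ 0) (d : ℤ) : (m : ℝ) * φ ≠ d := fun h =>
  goldenRatio_irrational.intCast_mul hm ⟨d, by exact_mod_cast h.symm⟩

lemma coordS_wythoffPoint_mem (i : ℕ) : coordS (wythoffPoint i) ∈ Ioo (-φ) (-φ⁻¹) := by
  have hle := Int.floor_le (((i : ℝ) + 1) * φ)
  have hlt := Int.lt_floor_add_one (((i : ℝ) + 1) * φ)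
  have hne := intCast_mul_goldenRatio_ne_intCast (m := i + 1) (by positivity)
    ⌊((i : ℝ) + 1) * φ⌋
  push_cast at hne
  have := hle.lt_of_ne hne.symm
  rw [coordS_apply, wythoffPoint]
  push_cast
  constructor <;> linarith [goldenRatio_eq_inv_add_one]

lemma add_one_le_coordU_wythoffPoint (i : ℕ) : (i : ℝ) + 1 ≤ coordU (wythoffPoint i) := by
  have hfloor : (i : ℤ) + 1 ≤ ⌊((i : ℝ) + 1) * φ⌋ := by
    rw [Int.le_floor]
    push_cast
    exact le_mul_of_one_le_right (by positivity) one_lt_goldenRatio.le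
  have hcast : (i : ℝ) + 1 ≤ ⌊((i : ℝ) + 1) * φ⌋ := by exact_mod_cast hfloor
  rw [coordU_apply, wythoffPoint]
  push_cast
  linarith [mul_nonneg i.cast_nonneg (neg_nonneg.2 goldenConj_neg.le)]

lemma coordU_wythoffPoint_pos (i : ℕ) : 0 < coordU (wythoffPoint i) :=
  lt_of_lt_of_le (by positivity) (add_one_le_coordU_wythoffPoint i)

lemma exists_wythoffPoint_eq {l : ℤ × ℤ} (hU : 0 < coordU l) (hS : coordS l ∈ Ioc (-φ) (-φ⁻¹)) :
    ∃ i, wythoffPoint i = l := by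
  rw [coordS_apply, mem_Ioc] at hS
  rw [coordU_apply] at hU
  obtain ⟨i, hi⟩ : ∃ i : ℕ, (i : ℤ) = l.1 := by
    refine ⟨l.1.toNat, Int.toNat_of_nonneg ?_⟩
    by_contra! hneg
    have hle : (l.1 : ℝ) ≤ -1 := by exact_mod_cast Int.le_sub_one_of_lt hneg
    nlinarith [goldenRatio_pos, goldenConj_neg]
  have hi' : (l.1 : ℝ) = i := by exact_mod_cast hi.symm
  rw [hi'] at hS
  refine ⟨i, Prod.ext hi (Int.floor_eq_iff.2 ⟨by linarith, ?_⟩)⟩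
  have hne := intCast_mul_goldenRatio_ne_intCast (m := i + 1) (by positivity) (l.2 + 1)
  push_cast at hne
  exact lt_of_le_of_ne (by linarith [goldenRatio_eq_inv_add_one]) hne

lemma phi_eq_goldenRatio : phi = φ := rfl

lemma W_succ_one (i : ℕ) : W (i + 1) 1 = (wythoffPoint i).1 + (wythoffPoint i).2 := by
  obtain ⟨hlt, hgt⟩ := coordS_wythoffPoint_mem i
  rw [coordS_apply] at hlt hgt
  have hfloor : ⌊phi * ((i + 1 : ℕ) : ℝ)⌋ = (wythoffPoint i).2 := by
    rw [phi_eq_goldenRatio, wythoffPoint, mul_comm, Nat.cast_add_one]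
  rw [W, hfloor, phi_eq_goldenRatio, Int.floor_eq_iff]
  have hφ := goldenRatio_eq_inv_add_one
  have hmul : φ⁻¹ * φ = 1 := inv_mul_cancel₀ goldenRatio_ne_zero
  have hneg := mul_neg_of_pos_of_neg inv_goldenRatio_pos
    (hgt.trans (neg_lt_zero.2 inv_goldenRatio_pos))
  have hlt' := mul_lt_mul_of_pos_left hlt inv_goldenRatio_pos
  push_cast
  constructor
  · linear_combination hneg - (wythoffPoint i).2 * hφ - (wythoffPoint i).1 * hmul
  · linear_combination hlt' + (wythoffPoint i).2 * hφ + ((wythoffPoint i).1 + 1) * hmul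

lemma W_succ_two (i : ℕ) : W (i + 1) 2 = (wythoffPoint i).1 + 2 * (wythoffPoint i).2 := by
  have hfloor : ⌊phi * ((i + 1 : ℕ) : ℝ)⌋ = (wythoffPoint i).2 := by
    rw [phi_eq_goldenRatio, wythoffPoint, mul_comm, Nat.cast_add_one]
  have hW : W (i + 1) 2 = W (i + 1) 1 + (wythoffPoint i).2 := by
    rw [W, W, hfloor, phi_eq_goldenRatio, goldenRatio_sq, add_one_mul, Int.floor_add_intCast]
  rw [hW, W_succ_one]
  ring

lemma wplus_succ (i : ℕ) : wplus (i + 1) = φ * coordU (wythoffPoint i) := by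
  rw [wplus, W_succ_one, W_succ_two, coordU_apply, phi_eq_goldenRatio, inv_goldenRatio]
  push_cast
  linear_combination
    (((wythoffPoint i).1 + (wythoffPoint i).2 : ℝ)) * goldenConj_sq -
      ((wythoffPoint i).2 : ℝ) * goldenRatio_add_goldenConj +
      ((wythoffPoint i).1 : ℝ) * goldenRatio_mul_goldenConj

lemma wminus_succ (i : ℕ) : wminus (i + 1) = -ψ * coordS (wythoffPoint i) := by
  rw [wminus, W_succ_one, W_succ_two, coordS_apply, phi_eq_goldenRatio]
  push_cast
  linear_combination
    (((wythoffPoint i).1 + (wythoffPoint i).2 : ℝ)) * goldenRatio_sq -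
      ((wythoffPoint i).2 : ℝ) * goldenRatio_add_goldenConj +
      ((wythoffPoint i).1 : ℝ) * goldenRatio_mul_goldenConj

lemma absNorm_wythoffPoint (i : ℕ) : absNorm (wythoffPoint i) = eta (i + 1) := by
  have hneg : coordS (wythoffPoint i) < 0 :=
    (coordS_wythoffPoint_mem i).2.trans (neg_lt_zero.2 inv_goldenRatio_pos)
  rw [absNorm, abs_of_neg (mul_neg_of_pos_of_neg (coordU_wythoffPoint_pos i) hneg), eta, wplus_succ,
    wminus_succ]
  linear_combination
    (-(coordU (wythoffPoint i) * coordS (wythoffPoint i))) * goldenRatio_mul_goldenConj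

lemma half_le_eta (i : ℕ) : ((i : ℝ) + 1) / 2 ≤ eta (i + 1) := by
  have hS := (coordS_wythoffPoint_mem i).2
  have hinv : (2 : ℝ)⁻¹ ≤ φ⁻¹ := inv_anti₀ goldenRatio_pos goldenRatio_lt_two.le
  rw [← absNorm_wythoffPoint, absNorm_eq_mul, div_eq_mul_inv]
  gcongr
  · exact (add_one_le_coordU_wythoffPoint i).trans (le_abs_self _)
  · exact (le_neg.1 (hS.le.trans (neg_le_neg hinv))).trans (neg_le_abs _)

lemma eta_succ_pos (i : ℕ) : 0 < eta (i + 1) := lt_of_lt_of_le (by positivity) (half_le_eta i)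

lemma summable_eta_rpow {τ : ℝ} (hτ : 1 < τ) : Summable fun i => eta (i + 1) ^ (-τ) := by
  have hsum : Summable fun i : ℕ => ((i : ℝ) + 1) ^ (-τ) := by
    simpa using (summable_nat_add_iff 1).2 (Real.summable_nat_rpow.2 (neg_lt_neg hτ))
  refine (hsum.mul_left ((1 / 2) ^ (-τ))).of_nonneg_of_le
    (fun i => Real.rpow_nonneg (eta_succ_pos i).le _) fun i => ?_
  rw [← Real.mul_rpow (by norm_num) (by positivity), one_div_mul_eq_div]
  exact Real.rpow_le_rpow_of_nonpos (by positivity) (half_le_eta i) (by linarith)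

lemma abs_intCast_units (s : ℤˣ) : |((s : ℤ) : ℝ)| = 1 := by
  rcases Int.units_eq_one_or s with rfl | rfl <;> simp

/-- The parametrisation of the nonzero lattice points by a row of the Wythoff array, a power of the
golden ratio and a sign. -/
noncomputable def orbitPoint (x : ℕ × ℤ × ℤˣ) : ℤ × ℤ :=
  (x.2.2 : ℤ) • (mulPhi ^ x.2.1) (wythoffPoint x.1)

lemma coordU_orbitPoint (i : ℕ) (k : ℤ) (s : ℤˣ) :
    coordU (orbitPoint (i, k, s)) = (s : ℤ) * (φ ^ k * coordU (wythoffPoint i)) := by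
  rw [orbitPoint, map_zsmul, coordU_mulPhi_zpow, zsmul_eq_mul]

lemma coordS_orbitPoint (i : ℕ) (k : ℤ) (s : ℤˣ) :
    coordS (orbitPoint (i, k, s)) = (s : ℤ) * (ψ ^ k * coordS (wythoffPoint i)) := by
  rw [orbitPoint, map_zsmul, coordS_mulPhi_zpow, zsmul_eq_mul]

lemma abs_coordU_orbitPoint (i : ℕ) (k : ℤ) (s : ℤˣ) :
    |coordU (orbitPoint (i, k, s))| = φ ^ k * coordU (wythoffPoint i) := by
  rw [coordU_orbitPoint, abs_mul, abs_intCast_units, one_mul, abs_of_pos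
    (mul_pos (zpow_pos goldenRatio_pos _) (coordU_wythoffPoint_pos i))]

lemma absNorm_orbitPoint (i : ℕ) (k : ℤ) (s : ℤˣ) :
    absNorm (orbitPoint (i, k, s)) = eta (i + 1) := by
  rw [← absNorm_wythoffPoint, ← absNorm_mulPhi_zpow k (wythoffPoint i), absNorm_eq_mul,
    absNorm_eq_mul, coordU_orbitPoint, coordS_orbitPoint, abs_mul (s : ℝ), abs_mul (s : ℝ),
    abs_intCast_units, one_mul, one_mul, coordU_mulPhi_zpow, coordS_mulPhi_zpow]

lemma orbitPoint_ne_zero (x : ℕ × ℤ × ℤˣ) : orbitPoint x ≠ 0 := by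
  intro h
  have habs := abs_coordU_orbitPoint x.1 x.2.1 x.2.2
  rw [h, map_zero, abs_zero] at habs
  exact (mul_pos (zpow_pos goldenRatio_pos _) (coordU_wythoffPoint_pos _)).ne habs

lemma orbitPoint_injective : Function.Injective orbitPoint := by
  rintro ⟨i, k, s⟩ ⟨j, m, t⟩ h
  obtain rfl : s = t := by
    have hU := congrArg coordU h
    rw [coordU_orbitPoint, coordU_orbitPoint] at hU
    have hi := mul_pos (zpow_pos goldenRatio_pos k) (coordU_wythoffPoint_pos i)
    have hj := mul_pos (zpow_pos goldenRatio_pos m) (coordU_wythoffPoint_pos j)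
    by_contra hst
    rw [Int.units_ne_iff_eq_neg.1 hst, Units.val_neg, Int.cast_neg, neg_mul, ← mul_neg] at hU
    linarith [mul_left_cancel₀ (Int.cast_ne_zero.2 (Units.ne_zero t)) hU]
  have hpt : (mulPhi ^ k) (wythoffPoint i) = (mulPhi ^ m) (wythoffPoint j) :=
    smul_right_injective _ (Units.ne_zero s) h
  obtain rfl : k = m := by
    have hS := congrArg coordS hpt
    rw [coordS_mulPhi_zpow, coordS_mulPhi_zpow] at hS
    refine (sub_eq_zero.1 (eq_zero_of_goldenConj_zpow_mul_mem_Ioc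
      (Ioo_subset_Ioc_self (coordS_wythoffPoint_mem i)) ?_))
    rw [zpow_sub₀ goldenConj_ne_zero, div_mul_eq_mul_div, hS,
      mul_div_cancel_left₀ _ (zpow_ne_zero _ goldenConj_ne_zero)]
    exact Ioo_subset_Ioc_self (coordS_wythoffPoint_mem j)
  have hij : (i : ℤ) = j := congrArg Prod.fst ((mulPhi ^ k).injective hpt)
  rw [Nat.cast_injective hij]

lemma exists_orbitPoint_eq {l : ℤ × ℤ} (hl : l ≠ 0) : ∃ x, orbitPoint x = l := by
  obtain ⟨s, hs⟩ : ∃ s : ℤˣ, 0 < (s : ℤ) * coordU l := by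
    rcases ((map_ne_zero_iff _ coordU_injective).2 hl).lt_or_gt with h | h
    · exact ⟨-1, by simpa using h⟩
    · exact ⟨1, by simpa using h⟩
  have hne : coordS ((s : ℤ) • l) ≠ 0 := by
    rw [map_ne_zero_iff _ coordS_injective]
    exact smul_ne_zero (Units.ne_zero s) hl
  obtain ⟨k, hk⟩ := exists_goldenConj_zpow_mul_mem_Ioc hne
  rw [← coordS_mulPhi_zpow] at hk
  have hpos : 0 < coordU ((mulPhi ^ k) ((s : ℤ) • l)) := by
    rw [coordU_mulPhi_zpow, map_zsmul, zsmul_eq_mul]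
    exact mul_pos (zpow_pos goldenRatio_pos k) hs
  obtain ⟨i, hi⟩ := exists_wythoffPoint_eq hpos hk
  refine ⟨(i, -k, s), ?_⟩
  have hss : (s : ℤ) * (s : ℤ) = 1 := by rw [← Units.val_mul, Int.units_mul_self, Units.val_one]
  rw [orbitPoint, hi, zpow_neg, ← Equiv.Perm.mul_apply, inv_mul_cancel,
    Equiv.Perm.one_apply, smul_smul, hss, one_smul]

lemma range_orbitPoint : range orbitPoint = {0}ᶜ :=
  Subset.antisymm (range_subset_iff.2 orbitPoint_ne_zero) fun _ hl => exists_orbitPoint_eq hl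

lemma summable_iff_orbitPoint {F : ℤ × ℤ → ℝ} (h0 : F 0 = 0) :
    Summable F ↔ Summable (F ∘ orbitPoint) :=
  (orbitPoint_injective.summable_iff fun l hl => by
    rw [range_orbitPoint, notMem_compl_iff] at hl; rwa [mem_singleton_iff.1 hl]).symm

lemma tsum_orbitPoint {F : ℤ × ℤ → ℝ} (h0 : F 0 = 0) : ∑' x, F (orbitPoint x) = ∑' l, F l :=
  orbitPoint_injective.tsum_eq fun l hl => by
    rw [range_orbitPoint]
    rintro rfl
    exact hl h0

/-! ### Lattice sums over orbits -/

/-- `OrbitSumLE U B` says that the sum of the nonnegative function `U` over every geometric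
progression of ratio `φ` in `(0, ∞)` is at most `B`. -/
structure OrbitSumLE (U : ℝ → ℝ) (B : ℝ) : Prop where
  nonneg : ∀ t, 0 ≤ U t
  summable : ∀ {x : ℝ}, 0 < x → Summable fun k : ℤ => U (φ ^ k * x)
  tsum_le : ∀ {x : ℝ}, 0 < x → ∑' k : ℤ, U (φ ^ k * x) ≤ B

lemma exists_zpow_mul_eq_zpow_add_mul {c x : ℝ} (hc : 1 < c) (hx : 0 < x) :
    ∃ y ∈ Ico 1 c, ∃ m : ℤ, ∀ k : ℤ, c ^ k * x = c ^ (k + m) * y := by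
  obtain ⟨m, hm, hm'⟩ := exists_mem_Ico_zpow hx hc
  have hc0 : 0 < c := zero_lt_one.trans hc
  have hpos := zpow_pos hc0 m
  refine ⟨x / c ^ m, ⟨(one_le_div₀ hpos).2 hm, ?_⟩, m, fun k => ?_⟩
  · rwa [div_lt_iff₀' hpos, ← zpow_add_one₀ hc0.ne']
  · rw [zpow_add₀ hc0.ne', mul_assoc, mul_div_cancel₀ _ hpos.ne']

lemma orbitSumLE_of_shell_le {U : ℝ → ℝ} {u : ℕ → ℝ} (hnonneg : ∀ t, 0 ≤ U t)
    (hzero : ∀ t, 1 ≤ t → U t = 0)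
    (hle : ∀ (j : ℕ) t, φ⁻¹ ^ (j + 1) ≤ t → t < φ⁻¹ ^ j → U t ≤ u j) (hu : Summable u) :
    OrbitSumLE U (∑' j, u j) := by
  have hφ := goldenRatio_pos
  have normalized : ∀ y ∈ Ico 1 φ,
      (Summable fun k : ℤ => U (φ ^ k * y)) ∧ ∑' k : ℤ, U (φ ^ k * y) ≤ ∑' j, u j := by
    intro y hy
    have hsupp : Function.support (fun k : ℤ => U (φ ^ k * y)) ⊆ range Int.negSucc := by
      rintro (k | k) hk
      · refine absurd (hzero _ (one_le_mul_of_one_le_of_one_le ?_ hy.1)) hk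
        exact one_le_zpow₀ one_lt_goldenRatio.le (Int.natCast_nonneg k)
      · exact mem_range_self k
    have hinj : Function.Injective Int.negSucc := fun _ _ => Int.negSucc.inj
    have hshell : ∀ j : ℕ, U (φ ^ Int.negSucc j * y) ≤ u j := fun j => by
      rw [zpow_negSucc, ← inv_pow]
      refine hle j _ (le_mul_of_one_le_right (by positivity) hy.1) ?_
      calc φ⁻¹ ^ (j + 1) * y < φ⁻¹ ^ (j + 1) * φ := by gcongr; exact hy.2
        _ = φ⁻¹ ^ j := by rw [pow_succ, mul_assoc, inv_mul_cancel₀ hφ.ne', mul_one]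
    have hsum : Summable fun j => U (φ ^ Int.negSucc j * y) :=
      hu.of_nonneg_of_le (fun _ => hnonneg _) hshell
    refine ⟨(hinj.summable_iff fun k hk => ?_).1 hsum, ?_⟩
    · exact Function.notMem_support.1 fun h => hk (hsupp h)
    · rw [← hinj.tsum_eq hsupp]
      exact hsum.tsum_le_tsum hshell hu
  refine ⟨hnonneg, fun {x} hx => ?_, fun {x} hx => ?_⟩ <;>
    obtain ⟨y, hy, m, hxy⟩ := exists_zpow_mul_eq_zpow_add_mul one_lt_goldenRatio hx <;>
    simp only [hxy]
  · exact (Equiv.addRight m).summable_iff.2 (normalized y hy).1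
  · exact ((Equiv.addRight m).tsum_eq fun k => U (φ ^ k * y)).trans_le (normalized y hy).2

lemma orbitSumLE_indicator_rpow {s : ℝ} (hs : 0 < s) :
    OrbitSumLE ((Ico 0 1).indicator (· ^ s)) (∑' j : ℕ, (φ⁻¹ ^ s) ^ j) := by
  have hφ := inv_goldenRatio_pos
  refine orbitSumLE_of_shell_le (fun t => indicator_nonneg (fun t ht => rpow_nonneg ht.1 _) t)
    (fun t ht => indicator_of_notMem (fun h => ht.not_gt h.2) _) (fun j t hj hj' => ?_)
    (summable_geometric_of_lt_one (by positivity) (rpow_lt_one hφ.le inv_goldenRatio_lt_one hs))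
  have ht : 0 ≤ t := (pow_pos hφ _).le.trans hj
  have hmem : t ∈ Ico (0 : ℝ) 1 :=
    ⟨ht, hj'.trans_le (pow_le_one₀ hφ.le inv_goldenRatio_lt_one.le)⟩
  rw [indicator_of_mem hmem, rpow_pow_comm hφ.le]
  exact rpow_le_rpow ht hj'.le hs.le

lemma orbitSumLE_indicator_one (n : ℕ) :
    OrbitSumLE ((Ioo (φ⁻¹ ^ n) 1).indicator 1) n := by
  have hφ := inv_goldenRatio_pos
  have hsum : HasSum (fun j => if j < n then (1 : ℝ) else 0) n := by
    have h := hasSum_sum_of_ne_finset_zero (L := .unconditional ℕ)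
      (f := fun j => if j < n then (1 : ℝ) else 0) (s := Finset.range n) fun j hj =>
        if_neg (by simpa using hj)
    rwa [Finset.sum_congr rfl fun j hj => if_pos (Finset.mem_range.1 hj), Finset.sum_const,
      Finset.card_range, nsmul_one] at h
  rw [← hsum.tsum_eq]
  refine orbitSumLE_of_shell_le (fun t => indicator_nonneg (fun _ _ => zero_le_one) t)
    (fun t ht => indicator_of_notMem (fun h => ht.not_gt h.2) _) (fun j t _ hj => ?_) hsum.summable
  refine indicator_apply_le' (fun h => ?_) fun _ => by positivity
  have hjn : j < n := by
    by_contra! hnj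
    exact (h.1.trans hj).not_ge (pow_le_pow_of_le_one hφ.le inv_goldenRatio_lt_one.le hnj)
  rw [if_pos hjn, Pi.one_apply]

lemma OrbitSumLE.hasSum_units {U : ℝ → ℝ} {B x : ℝ} (H : OrbitSumLE U B) (hx : 0 < x) :
    HasSum (fun p : ℤ × ℤˣ => U (φ ^ p.1 * x)) (2 * ∑' k : ℤ, U (φ ^ k * x)) := by
  have hfiber : ∀ k : ℤ, HasSum (fun _ : ℤˣ => U (φ ^ k * x)) (2 * U (φ ^ k * x)) := fun k => by
    simpa using hasSum_fintype fun _ : ℤˣ => U (φ ^ k * x)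
  have hsum : Summable fun p : ℤ × ℤˣ => U (φ ^ p.1 * x) := by
    refine (summable_prod_of_nonneg fun _ => H.nonneg _).2 ⟨fun k => (hfiber k).summable, ?_⟩
    simpa only [(hfiber _).tsum_eq] using (H.summable hx).mul_left 2
  convert hsum.hasSum using 1
  simp only [hsum.tsum_prod, (hfiber _).tsum_eq, tsum_mul_left]

lemma OrbitSumLE.tsum_orbitPoint_le {U : ℝ → ℝ} {B τ : ℝ} (H : OrbitSumLE U B) (hτ : 1 < τ) :
    Summable (fun x => U |coordU (orbitPoint x)| * absNorm (orbitPoint x) ^ (-τ)) ∧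
      ∑' x, U |coordU (orbitPoint x)| * absNorm (orbitPoint x) ^ (-τ) ≤
        2 * (∑' i, eta (i + 1) ^ (-τ)) * B := by
  set w : ℕ × ℤ × ℤˣ → ℝ := fun x => U |coordU (orbitPoint x)| * absNorm (orbitPoint x) ^ (-τ)
  have hη : ∀ i, 0 ≤ eta (i + 1) ^ (-τ) := fun i => rpow_nonneg (eta_succ_pos i).le _
  have hw : 0 ≤ w := fun x => mul_nonneg (H.nonneg _) (rpow_nonneg (absNorm_nonneg _) _)
  have hw_eq : ∀ i, (fun p => w (i, p)) = fun p =>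
      U (φ ^ p.1 * coordU (wythoffPoint i)) * eta (i + 1) ^ (-τ) := fun i => by
    ext ⟨k, s⟩
    simp only [w, abs_coordU_orbitPoint, absNorm_orbitPoint]
  have hrow : ∀ i, HasSum (fun p => w (i, p))
      (2 * (∑' k : ℤ, U (φ ^ k * coordU (wythoffPoint i))) * eta (i + 1) ^ (-τ)) := fun i => by
    rw [hw_eq]
    exact (H.hasSum_units (coordU_wythoffPoint_pos i)).mul_right _
  have hrow_le : ∀ i, 2 * (∑' k : ℤ, U (φ ^ k * coordU (wythoffPoint i))) * eta (i + 1) ^ (-τ) ≤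
      2 * B * eta (i + 1) ^ (-τ) := fun i => by
    have := H.tsum_le (coordU_wythoffPoint_pos i)
    have := hη i
    gcongr
  have hmajor := (summable_eta_rpow hτ).mul_left (2 * B)
  have hrows : Summable fun i =>
      2 * (∑' k : ℤ, U (φ ^ k * coordU (wythoffPoint i))) * eta (i + 1) ^ (-τ) :=
    hmajor.of_nonneg_of_le (fun i => mul_nonneg (mul_nonneg zero_le_two
      (tsum_nonneg fun _ => H.nonneg _)) (hη i)) hrow_le
  have hsum : Summable w := by
    refine (summable_prod_of_nonneg hw).2 ⟨fun i => (hrow i).summable, ?_⟩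
    simpa only [(hrow _).tsum_eq] using hrows
  refine ⟨hsum, ?_⟩
  simp only [hsum.tsum_prod, (hrow _).tsum_eq]
  refine (hrows.tsum_le_tsum hrow_le hmajor).trans_eq ?_
  rw [tsum_mul_left, mul_right_comm]

theorem OrbitSumLE.tsum_abs_le_of_coordU {U : ℝ → ℝ} {B τ C : ℝ} (H : OrbitSumLE U B) (hτ : 1 < τ)
    (hC : 0 ≤ C) {F : ℤ × ℤ → ℝ} (h0 : F 0 = 0)
    (hF : ∀ l ≠ 0, |F l| ≤ C * (U |coordU l| * absNorm l ^ (-τ))) :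
    Summable F ∧ ∑' l, |F l| ≤ C * (2 * (∑' i, eta (i + 1) ^ (-τ)) * B) := by
  obtain ⟨hsum, hle⟩ := H.tsum_orbitPoint_le hτ
  have hFle := fun x => hF _ (orbitPoint_ne_zero x)
  have habs : Summable fun x => |F (orbitPoint x)| :=
    (hsum.mul_left C).of_nonneg_of_le (fun _ => abs_nonneg _) hFle
  have habs0 : |F 0| = 0 := by rw [h0, abs_zero]
  refine ⟨((summable_iff_orbitPoint (F := fun l => |F l|) habs0).2 habs).of_abs, ?_⟩
  calc ∑' l, |F l| = ∑' x, |F (orbitPoint x)| := (tsum_orbitPoint (F := fun l => |F l|) habs0).symm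
    _ ≤ C * ∑' x, U |coordU (orbitPoint x)| * absNorm (orbitPoint x) ^ (-τ) := by
        rw [← tsum_mul_left]
        exact habs.tsum_le_tsum hFle (hsum.mul_left C)
    _ ≤ _ := by gcongr

theorem OrbitSumLE.tsum_abs_le_of_coordS {U : ℝ → ℝ} {B τ C : ℝ} (H : OrbitSumLE U B) (hτ : 1 < τ)
    (hC : 0 ≤ C) {F : ℤ × ℤ → ℝ} (h0 : F 0 = 0)
    (hF : ∀ l ≠ 0, |F l| ≤ C * (U |coordS l| * absNorm l ^ (-τ))) :
    Summable F ∧ ∑' l, |F l| ≤ C * (2 * (∑' i, eta (i + 1) ^ (-τ)) * B) := by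
  have hzero : conjSwap 0 = 0 := rfl
  have hswap := H.tsum_abs_le_of_coordU hτ hC (F := F ∘ conjSwap)
    (by rw [Function.comp_apply, hzero, h0]) fun l hl => by
      have hbound := hF (conjSwap l) (hzero ▸ conjSwap.injective.ne hl)
      rwa [coordS_conjSwap, abs_neg, absNorm_conjSwap] at hbound
  refine ⟨conjSwap.summable_iff.1 hswap.1, ?_⟩
  rw [← conjSwap.tsum_eq]
  exact hswap.2

/-! ### Perturbation of a single summand -/

lemma exists_abs_rpow_sub_rpow_le (e : ℝ) {a : ℝ} (ha : 0 < a) (b : ℝ) :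
    ∃ C, 0 ≤ C ∧ ∀ s ∈ Icc a b, ∀ t ∈ Icc a b, |s ^ e - t ^ e| ≤ C * |s - t| := by
  have hsmooth : ContDiffOn ℝ 1 (fun t : ℝ => t ^ e) (Icc a b) := fun t ht =>
    (Real.contDiffAt_rpow_const_of_ne (ha.trans_le ht.1).ne').contDiffWithinAt
  obtain ⟨K, hK⟩ :=
    hsmooth.exists_lipschitzOnWith one_ne_zero (convex_Icc a b) isCompact_Icc
  exact ⟨K, K.2, fun s hs t ht => by simpa only [Real.dist_eq] using hK.dist_le_mul s hs t ht⟩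

lemma exists_abs_rpow_div_sub_one_le (e : ℝ) : ∃ C, 0 ≤ C ∧ ∀ x y : ℝ, y ≠ 0 → |x| ≤ 2 * |y| →
    |y| ≤ 2 * |x| → |(|x| / |y|) ^ e - 1| ≤ C * (|x - y| / |y|) := by
  obtain ⟨C, hC, hlip⟩ := exists_abs_rpow_sub_rpow_le e one_half_pos 2
  refine ⟨C, hC, fun x y hy hxy hyx => ?_⟩
  have hpos : 0 < |y| := abs_pos.2 hy
  have hmem : |x| / |y| ∈ Icc (1 / 2 : ℝ) 2 :=
    ⟨by rw [le_div_iff₀ hpos]; linarith, by rwa [div_le_iff₀ hpos]⟩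
  calc |(|x| / |y|) ^ e - 1| ≤ C * |(|x| / |y|) - 1| := by
        simpa using hlip _ hmem 1 (by norm_num)
    _ = C * (|(|x| - |y|)| / |y|) := by
        rw [div_sub_one hpos.ne', abs_div, abs_abs]
    _ ≤ C * (|x - y| / |y|) :=
        mul_le_mul_of_nonneg_left
          (div_le_div_of_nonneg_right (abs_abs_sub_abs_le x y) hpos.le) hC

lemma exists_abs_one_sub_rpow_sub_one_le (e : ℝ) :
    ∃ C, 0 ≤ C ∧ ∀ q : ℝ, |q| ≤ 1 / 4 → |(1 - q) ^ e - 1| ≤ C * |q| := by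
  obtain ⟨C, hC, hlip⟩ := exists_abs_rpow_sub_rpow_le e (by norm_num : (0 : ℝ) < 3 / 4) (5 / 4)
  refine ⟨C, hC, fun q hq => ?_⟩
  obtain ⟨hlow, hupp⟩ := abs_le.1 hq
  simpa using hlip (1 - q) ⟨by linarith, by linarith⟩ 1 (by norm_num)

lemma abs_le_one_add_of_abs_sub_one_le {z C t : ℝ} (hC : 0 ≤ C) (hz : |z - 1| ≤ C * t)
    (ht : t ≤ 1) : |z| ≤ 1 + C := by
  have habs := abs_sub_abs_le_abs_sub z 1
  rw [abs_one] at habs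
  linarith [mul_le_of_le_one_right hC ht]

/-- `g` is bounded by `M` and Hölder continuous with exponent `α` and constant `L`. -/
structure IsBoundedHolder (g : ℝ → ℝ) (α M L : ℝ) : Prop where
  abs_apply_le : ∀ t, |g t| ≤ M
  abs_sub_le : ∀ s t, |g s - g t| ≤ L * |s - t| ^ α

namespace IsBoundedHolder

variable {g g' : ℝ → ℝ} {α β M M' L L' : ℝ}

lemma bound_nonneg (hg : IsBoundedHolder g α M L) : 0 ≤ M :=
  (abs_nonneg _).trans (hg.abs_apply_le 0)

lemma const_nonneg (hg : IsBoundedHolder g α M L) : 0 ≤ L := by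
  simpa using (abs_nonneg _).trans (hg.abs_sub_le 0 1)

lemma mul (hg : IsBoundedHolder g α M L) (hg' : IsBoundedHolder g' α M' L') :
    IsBoundedHolder (fun t => g t * g' t) α (M * M') (L * M' + M * L') where
  abs_apply_le t := by
    rw [abs_mul]
    exact mul_le_mul (hg.abs_apply_le t) (hg'.abs_apply_le t) (abs_nonneg _) hg.bound_nonneg
  abs_sub_le s t := by
    have hL := hg.const_nonneg
    have hM := hg.bound_nonneg
    calc |g s * g' s - g t * g' t| = |(g s - g t) * g' s + g t * (g' s - g' t)| := by ring_nf
      _ ≤ |g s - g t| * |g' s| + |g t| * |g' s - g' t| := by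
          rw [← abs_mul, ← abs_mul]; exact abs_add_le _ _
      _ ≤ L * |s - t| ^ α * M' + M * (L' * |s - t| ^ α) := by
          gcongr
          exacts [hg.abs_sub_le s t, hg'.abs_apply_le s, hg.abs_apply_le t, hg'.abs_sub_le s t]
      _ = (L * M' + M * L') * |s - t| ^ α := by ring

lemma of_exponent_le (hg : IsBoundedHolder g α M L) (hβ : 0 ≤ β) (hβα : β ≤ α) :
    IsBoundedHolder g β M (L + 2 * M) where
  abs_apply_le := hg.abs_apply_le
  abs_sub_le s t := by
    have hL := hg.const_nonneg
    have hM := hg.bound_nonneg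
    rcases le_total |s - t| 1 with hle | hge
    · calc |g s - g t| ≤ L * |s - t| ^ α := hg.abs_sub_le s t
        _ ≤ (L + 2 * M) * |s - t| ^ β :=
          mul_le_mul (by linarith) (rpow_le_rpow_of_exponent_ge' (abs_nonneg _) hle hβ hβα)
            (by positivity) (by positivity)
    · calc |g s - g t| ≤ |g s| + |g t| := abs_sub _ _
        _ ≤ (L + 2 * M) * 1 := by linarith [hg.abs_apply_le s, hg.abs_apply_le t]
        _ ≤ (L + 2 * M) * |s - t| ^ β := by
            gcongr
            exact one_le_rpow hge hβ

lemma abs_sub_le_four_mul (hg : IsBoundedHolder g α M L) (hα : 0 ≤ α) (hα1 : α ≤ 1) {s t δ : ℝ}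
    (hδ : 0 ≤ δ) (hst : |s - t| ≤ 4 * δ) : |g s - g t| ≤ 4 * L * δ ^ α := by
  have hL := hg.const_nonneg
  calc |g s - g t| ≤ L * |s - t| ^ α := hg.abs_sub_le s t
    _ ≤ L * (4 * δ) ^ α := by gcongr
    _ = L * (4 ^ α * δ ^ α) := by rw [mul_rpow (by norm_num) hδ]
    _ ≤ L * (4 * δ ^ α) := by
        gcongr
        exact rpow_le_self_of_one_le (by norm_num) hα1
    _ = 4 * L * δ ^ α := by ring

end IsBoundedHolder

/-- A weight to be evaluated at lattice coordinates: bounded, Hölder continuous, even and supported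
in `|t| < 2 / 3`. -/
structure IsCutoffWeight (h : ℝ → ℝ) (α M L : ℝ) : Prop extends IsBoundedHolder h α M L where
  eq_zero : ∀ t, 2 / 3 ≤ |t| → h t = 0
  even : ∀ t, h (-t) = h t

lemma abs_product_sub_le {r x y hX hY hb hp h0 M K δ : ℝ} (hxK : |x| ≤ K) (hyK : |y| ≤ K)
    (hXM : |hX| ≤ M) (hYM : |hY| ≤ M) (hbM : |hb| ≤ M) (hpM : |hp| ≤ M) (h0M : |h0| ≤ M)
    (hr : |r - 1| ≤ δ) (hX0 : |hX - h0| ≤ δ) (hYp : |hY - hp| ≤ δ) (hb0 : |hb - h0| ≤ δ)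
    (hy : |y - 1| ≤ δ) :
    |r * hX * hY * x * y - hp * hb - h0 * hp * (x - 1) - h0 * hb * (y - 1)| ≤
      (K * (M * M * K + 2 * (M * K) + M * M) + (M + M * M)) * δ := by
  have hK : 0 ≤ K := (abs_nonneg _).trans hxK
  have hM : 0 ≤ M := (abs_nonneg _).trans h0M
  have hδ : 0 ≤ δ := (abs_nonneg _).trans hr
  calc |r * hX * hY * x * y - hp * hb - h0 * hp * (x - 1) - h0 * hb * (y - 1)|
      = |x * ((r - 1) * hX * hY * y + (hX - h0) * hY * y + h0 * (hY - hp) * y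
          + h0 * hp * (y - 1)) - (hp * (hb - h0) + h0 * hb * (y - 1))| := by ring_nf
    _ ≤ |x| * (|r - 1| * |hX| * |hY| * |y| + |hX - h0| * |hY| * |y| + |h0| * |hY - hp| * |y|
          + |h0| * |hp| * |y - 1|) + (|hp| * |hb - h0| + |h0| * |hb| * |y - 1|) := by
        simp only [← abs_mul]
        refine (abs_sub _ _).trans (add_le_add ?_ (abs_add_le _ _))
        rw [abs_mul]
        gcongr
        refine (abs_add_le _ _).trans (add_le_add_left ?_ _)
        exact abs_add_three _ _ _
    _ ≤ K * (δ * M * M * K + δ * M * K + M * δ * K + M * M * δ) + (M * δ + M * M * δ) := by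
        gcongr
    _ = (K * (M * M * K + 2 * (M * K) + M * M) + (M + M * M)) * δ := by ring

/-- The defect in approximating the summand
`(1 - q) ^ σ h(εX / (1 - q)) h(εY / (1 - q)) |XY| ^ (-σ)` of the lattice sum, with `X`
close to `b` and `Y` close to `p`, by its main term at `(b, p)` and the two corrections which
survive when one of the arguments of `h` is close to `0`. -/
noncomputable def summandDefect (h : ℝ → ℝ) (σ ε q b p X Y : ℝ) : ℝ :=
  (1 - q) ^ σ * h (ε * X / (1 - q)) * h (ε * Y / (1 - q)) * |X| ^ (-σ) * |Y| ^ (-σ)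
    - h (ε * p) * h (ε * b) * |b| ^ (-σ) * |p| ^ (-σ)
    - h 0 * h (ε * p) * (|X| ^ (-σ) - |b| ^ (-σ)) * |p| ^ (-σ)
    - h 0 * h (ε * b) * (|Y| ^ (-σ) - |p| ^ (-σ)) * |b| ^ (-σ)

lemma summandDefect_swap (h : ℝ → ℝ) (σ ε q b p X Y : ℝ) :
    summandDefect h σ ε q b p X Y = summandDefect h σ ε q p b Y X := by
  simp only [summandDefect]; ring

/-- The range of parameters in which `summandDefect` is estimated. -/
structure IsPerturbation (ε q b p X Y : ℝ) : Prop where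
  pos : 0 < ε
  le_quarter : ε ≤ 1 / 4
  abs_q_le : |q| ≤ ε ^ 2
  one_le_b : 1 ≤ |b|
  one_le_p : 1 ≤ |p|
  mul_b_lt : ε * |b| < 1
  mul_p_lt : ε * |p| < 1
  X_sub_le : |X - b| ≤ ε * |p|
  Y_sub_le : |Y - p| ≤ ε * |b|
  two_le_X : 2 ≤ |X|
  two_le_Y : 2 ≤ |Y|

namespace IsPerturbation

variable {ε q b p X Y : ℝ}

lemma swap (H : IsPerturbation ε q b p X Y) : IsPerturbation ε q p b Y X :=
  ⟨H.pos, H.le_quarter, H.abs_q_le, H.one_le_p, H.one_le_b, H.mul_p_lt, H.mul_b_lt, H.Y_sub_le,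
    H.X_sub_le, H.two_le_Y, H.two_le_X⟩

lemma abs_q_le_quarter (H : IsPerturbation ε q b p X Y) : |q| ≤ 1 / 4 := by
  nlinarith [H.abs_q_le, H.pos, H.le_quarter]

lemma three_quarters_le (H : IsPerturbation ε q b p X Y) : 3 / 4 ≤ 1 - q := by
  linarith [(abs_le.1 H.abs_q_le_quarter).2]

lemma abs_X_le (H : IsPerturbation ε q b p X Y) : |X| ≤ 2 * |b| := by
  linarith [abs_sub_abs_le_abs_sub X b, H.X_sub_le, H.mul_p_lt, H.one_le_b]

lemma abs_b_le (H : IsPerturbation ε q b p X Y) : |b| ≤ 2 * |X| := by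
  linarith [abs_sub_abs_le_abs_sub b X, abs_sub_comm b X, H.X_sub_le, H.mul_p_lt, H.two_le_X]

lemma abs_arg_X_le (H : IsPerturbation ε q b p X Y) :
    |ε * X / (1 - q) - 0| ≤ 4 * (ε * |b|) := by
  have hq := H.three_quarters_le
  have hX := mul_le_mul_of_nonneg_left H.abs_X_le H.pos.le
  rw [sub_zero, abs_div, abs_mul, abs_of_pos H.pos, abs_of_pos (by linarith : 0 < 1 - q),
    div_le_iff₀ (by linarith)]
  nlinarith [mul_nonneg H.pos.le (abs_nonneg b)]

lemma abs_arg_Y_sub_le (H : IsPerturbation ε q b p X Y) :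
    |ε * Y / (1 - q) - ε * p| ≤ 4 * (ε * |b|) := by
  have hq := H.three_quarters_le
  have hε := H.pos
  have hqp : |q * p| ≤ |b| := by
    rw [abs_mul]
    nlinarith [H.abs_q_le, H.mul_p_lt, H.one_le_b, H.le_quarter, abs_nonneg p]
  have hsum : |(Y - p) + q * p| ≤ 2 * |b| := by
    nlinarith [abs_add_le (Y - p) (q * p), H.Y_sub_le, H.le_quarter, abs_nonneg b]
  have hdiff : ε * Y / (1 - q) - ε * p = ε * ((Y - p) + q * p) / (1 - q) := by
    field_simp [(by linarith : 1 - q ≠ 0)]; ring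
  rw [hdiff, abs_div, abs_mul, abs_of_pos hε, abs_of_pos (by linarith : 0 < 1 - q),
    div_le_iff₀ (by linarith)]
  nlinarith [mul_nonneg hε.le (abs_nonneg b), mul_le_mul_of_nonneg_left hsum hε.le]

lemma mul_abs_b_le_rpow (H : IsPerturbation ε q b p X Y) {α : ℝ} (hα1 : α ≤ 1) :
    ε * |b| ≤ (ε * |b|) ^ α :=
  self_le_rpow_of_le_one (mul_nonneg H.pos.le (abs_nonneg b)) H.mul_b_lt.le hα1

lemma abs_q_le_rpow (H : IsPerturbation ε q b p X Y) {α : ℝ} (hα1 : α ≤ 1) :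
    |q| ≤ (ε * |b|) ^ α := by
  refine le_trans ?_ (H.mul_abs_b_le_rpow hα1)
  nlinarith [H.abs_q_le, H.pos, H.le_quarter, H.one_le_b]

lemma Y_sub_div_le_rpow (H : IsPerturbation ε q b p X Y) {α : ℝ} (hα1 : α ≤ 1) :
    |Y - p| / |p| ≤ (ε * |b|) ^ α :=
  (div_le_self (abs_nonneg _) H.one_le_p).trans
    (H.Y_sub_le.trans (H.mul_abs_b_le_rpow hα1))

lemma X_sub_div_le_one (H : IsPerturbation ε q b p X Y) : |X - b| / |b| ≤ 1 :=
  (div_le_self (abs_nonneg _) H.one_le_b).trans (H.X_sub_le.trans H.mul_p_lt.le)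

lemma summandDefect_eq (H : IsPerturbation ε q b p X Y) (h : ℝ → ℝ) (σ : ℝ) :
    summandDefect h σ ε q b p X Y =
      ((1 - q) ^ σ * h (ε * X / (1 - q)) * h (ε * Y / (1 - q)) * (|X| / |b|) ^ (-σ)
          * (|Y| / |p|) ^ (-σ) - h (ε * p) * h (ε * b)
        - h 0 * h (ε * p) * ((|X| / |b|) ^ (-σ) - 1)
        - h 0 * h (ε * b) * ((|Y| / |p|) ^ (-σ) - 1)) * (|b| ^ (-σ) * |p| ^ (-σ)) := by
  have hb : |b| ^ (-σ) ≠ 0 := (rpow_pos_of_pos (zero_lt_one.trans_le H.one_le_b) _).ne'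
  have hp : |p| ^ (-σ) ≠ 0 := (rpow_pos_of_pos (zero_lt_one.trans_le H.one_le_p) _).ne'
  rw [summandDefect, div_rpow (abs_nonneg _) (abs_nonneg _),
    div_rpow (abs_nonneg _) (abs_nonneg _)]
  field_simp

end IsPerturbation

lemma IsBoundedHolder.exists_abs_summandDefect_le_of_abs_le {h : ℝ → ℝ} {α M L : ℝ}
    (H : IsBoundedHolder h α M L) (hα : 0 ≤ α) (hα1 : α ≤ 1) (σ : ℝ) :
    ∃ C, 0 ≤ C ∧ ∀ ε q b p X Y : ℝ, IsPerturbation ε q b p X Y →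
      |summandDefect h σ ε q b p X Y| ≤ C * (ε * |b|) ^ α * (|b| ^ (-σ) * |p| ^ (-σ)) := by
  obtain ⟨C₁, hC₁, hratio⟩ := exists_abs_rpow_div_sub_one_le (-σ)
  obtain ⟨C₂, hC₂, hq⟩ := exists_abs_one_sub_rpow_sub_one_le σ
  have hL := H.const_nonneg
  have hM := H.bound_nonneg
  set K := 1 + C₁
  set Λ := C₁ + C₂ + 4 * L
  refine ⟨(K * (M * M * K + 2 * (M * K) + M * M) + (M + M * M)) * Λ, by positivity,
    fun ε q b p X Y P => ?_⟩
  have hd : 0 ≤ (ε * |b|) ^ α := rpow_nonneg (mul_nonneg P.pos.le (abs_nonneg b)) _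
  have le_delta : ∀ {c : ℝ}, c ≤ Λ → c * (ε * |b|) ^ α ≤ Λ * (ε * |b|) ^ α :=
    fun hc => mul_le_mul_of_nonneg_right hc hd
  have hC₁Λ : C₁ ≤ Λ := by simp only [Λ]; linarith
  have hC₂Λ : C₂ ≤ Λ := by simp only [Λ]; linarith
  have hLΛ : 4 * L ≤ Λ := by simp only [Λ]; linarith
  have hεb : 0 ≤ ε * |b| := mul_nonneg P.pos.le (abs_nonneg b)
  have hx := hratio X b (abs_pos.1 (zero_lt_one.trans_le P.one_le_b)) P.abs_X_le P.abs_b_le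
  have hy := hratio Y p (abs_pos.1 (zero_lt_one.trans_le P.one_le_p)) P.swap.abs_X_le
    P.swap.abs_b_le
  rw [P.summandDefect_eq h σ, abs_mul, abs_of_nonneg (a := |b| ^ (-σ) * |p| ^ (-σ)) (by positivity),
    mul_assoc _ Λ]
  gcongr
  refine abs_product_sub_le (abs_le_one_add_of_abs_sub_one_le hC₁ hx P.X_sub_div_le_one)
    (abs_le_one_add_of_abs_sub_one_le hC₁ hy P.swap.X_sub_div_le_one)
    (H.abs_apply_le _) (H.abs_apply_le _) (H.abs_apply_le _) (H.abs_apply_le _) (H.abs_apply_le _)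
    ?_ ?_ ?_ ?_ ?_
  · exact (hq q P.abs_q_le_quarter).trans
      ((mul_le_mul_of_nonneg_left (P.abs_q_le_rpow hα1) hC₂).trans (le_delta hC₂Λ))
  · exact (H.abs_sub_le_four_mul hα hα1 hεb P.abs_arg_X_le).trans (le_delta hLΛ)
  · exact (H.abs_sub_le_four_mul hα hα1 hεb P.abs_arg_Y_sub_le).trans (le_delta hLΛ)
  · refine (H.abs_sub_le_four_mul hα hα1 hεb ?_).trans (le_delta hLΛ)
    rw [sub_zero, abs_mul, abs_of_pos P.pos]
    linarith
  · exact hy.trans ((mul_le_mul_of_nonneg_left (P.Y_sub_div_le_rpow hα1) hC₁).trans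
      (le_delta hC₁Λ))

lemma IsBoundedHolder.exists_abs_summandDefect_le {h : ℝ → ℝ} {α β M L : ℝ}
    (H : IsBoundedHolder h α M L) (hβ : 0 ≤ β) (hβα : β ≤ α) (hα1 : α ≤ 1) (σ : ℝ) :
    ∃ C, 0 ≤ C ∧ ∀ ε q b p X Y : ℝ, IsPerturbation ε q b p X Y →
      |summandDefect h σ ε q b p X Y| ≤ C * ((ε ^ 2 * |b * p|) ^ (β / 2) * |b * p| ^ (-σ)) := by
  obtain ⟨C, hC, hle⟩ := H.exists_abs_summandDefect_le_of_abs_le (hβ.trans hβα) hα1 σ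
  have ordered : ∀ ε q b p X Y : ℝ, IsPerturbation ε q b p X Y → |b| ≤ |p| →
      |summandDefect h σ ε q b p X Y| ≤ C * ((ε ^ 2 * |b * p|) ^ (β / 2) * |b * p| ^ (-σ)) := by
    intro ε q b p X Y P hbp
    have hεb : 0 < ε * |b| := mul_pos P.pos (zero_lt_one.trans_le P.one_le_b)
    have hpow : (ε * |b|) ^ α ≤ (ε ^ 2 * |b * p|) ^ (β / 2) :=
      calc (ε * |b|) ^ α ≤ (ε * |b|) ^ β :=
            rpow_le_rpow_of_exponent_ge hεb P.mul_b_lt.le hβα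
        _ = ((ε * |b|) ^ 2) ^ (β / 2) := by
            rw [← rpow_natCast_mul hεb.le]; congr 1; push_cast; ring
        _ ≤ (ε ^ 2 * |b * p|) ^ (β / 2) := by
            rw [mul_pow, sq |b|, abs_mul]
            gcongr
    rw [abs_mul b p, mul_rpow (abs_nonneg b) (abs_nonneg p), ← mul_assoc, ← abs_mul]
    exact (hle ε q b p X Y P).trans (by gcongr)
  refine ⟨C, hC, fun ε q b p X Y P => ?_⟩
  rcases le_total |b| |p| with hbp | hpb
  · exact ordered ε q b p X Y P hbp
  · rw [summandDefect_swap, mul_comm b p]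
    exact ordered ε q p b Y X P.swap hpb

/-! ### The lattice sum and its main term -/

lemma abs_goldenConj_pow (n : ℕ) : |ψ ^ n| = φ⁻¹ ^ n := by rw [abs_pow, abs_goldenConj]

lemma abs_goldenConj_div_goldenRatio_pow (n : ℕ) : |(ψ / φ) ^ n| = (φ⁻¹ ^ n) ^ 2 := by
  rw [abs_pow, abs_div, abs_goldenConj, abs_of_pos goldenRatio_pos, div_eq_mul_inv, ← sq, ← pow_mul,
    ← pow_mul, mul_comm]

lemma inv_goldenRatio_pow_mul_cancel (n : ℕ) (x : ℝ) : φ⁻¹ ^ n * (φ ^ n * x) = x := by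
  rw [inv_pow, inv_mul_cancel_left₀ (pow_ne_zero n goldenRatio_ne_zero)]

lemma inv_goldenRatio_pow_le_quarter {n : ℕ} (hn : 3 ≤ n) : φ⁻¹ ^ n ≤ 1 / 4 := by
  have hφ : 3 / 2 ≤ φ := by
    have h5 : (2 : ℝ) ≤ √5 := by rw [le_sqrt' two_pos]; norm_num
    unfold goldenRatio
    linarith
  have hcube : 4 ≤ φ ^ 3 := by nlinarith [goldenRatio_sq]
  rw [inv_pow, one_div]
  exact inv_anti₀ four_pos (hcube.trans (pow_le_pow_right₀ one_lt_goldenRatio.le hn))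

lemma goldenRatio_pow_sub_goldenConj_pow_eq (n : ℕ) :
    φ ^ n - ψ ^ n = φ ^ n * (1 - (ψ / φ) ^ n) := by
  rw [mul_one_sub, ← mul_pow, mul_div_cancel₀ ψ goldenRatio_ne_zero]

lemma goldenRatio_pow_sub_goldenConj_pow_pos {n : ℕ} (hn : n ≠ 0) : 0 < φ ^ n - ψ ^ n := by
  rw [sub_pos]
  refine (le_abs_self _).trans_lt ?_
  rw [abs_goldenConj_pow]
  exact pow_lt_pow_left₀ (inv_goldenRatio_lt_one.trans one_lt_goldenRatio) inv_goldenRatio_pos.le hn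

lemma abs_coordU_pos {l : ℤ × ℤ} (hl : l ≠ 0) : 0 < |coordU l| :=
  abs_pos.2 ((map_ne_zero_iff _ coordU_injective).2 hl)

lemma abs_coordS_pos {l : ℤ × ℤ} (hl : l ≠ 0) : 0 < |coordS l| :=
  abs_pos.2 ((map_ne_zero_iff _ coordS_injective).2 hl)

lemma absNorm_pos {l : ℤ × ℤ} (hl : l ≠ 0) : 0 < absNorm l :=
  zero_lt_one.trans_le (one_le_absNorm hl)

lemma absNorm_zero : absNorm 0 = 0 := by rw [absNorm, map_zero, zero_mul, abs_zero]

lemma one_le_abs_coordS {l : ℤ × ℤ} (hl : l ≠ 0) (hU : |coordU l| < 1) : 1 ≤ |coordS l| := by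
  have hN := one_le_absNorm hl
  rw [absNorm_eq_mul] at hN
  nlinarith [abs_nonneg (coordS l)]

lemma two_le_abs_coordU_add_coordS {l : ℤ × ℤ} (hl : l ≠ 0) (hU : |coordU l| < 1) :
    2 ≤ |coordU l + coordS l| := by
  have hfst : l.1 ≠ 0 := fun h1 => hl <| by
    have hsnd : |(l.2 : ℝ)| < 1 := by simpa [coordU_apply, h1] using hU
    exact Prod.ext h1 (Int.abs_lt_one_iff.1 (by exact_mod_cast hsnd))
  have hone : (1 : ℝ) ≤ |(l.1 : ℝ)| := by exact_mod_cast Int.one_le_abs hfst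
  have h5 : (2 : ℝ) ≤ √5 := by rw [le_sqrt' two_pos]; norm_num
  rw [coordU_add_coordS, abs_mul, abs_of_nonneg (sqrt_nonneg 5)]
  nlinarith

/-- The box of lattice points which carries the `n`-th lattice sum. -/
def box (n : ℕ) : Set (ℤ × ℤ) := {l | |coordU l| < 1 ∧ |coordS l| < φ ^ n}

/-- The symmetry of `box n` which exchanges its two sides. -/
def boxSwap (n : ℕ) : Equiv.Perm (ℤ × ℤ) := conjSwap * mulPhi ^ (n : ℤ)

lemma coordU_boxSwap (n : ℕ) (l : ℤ × ℤ) : coordU (boxSwap n l) = -(ψ ^ n * coordS l) := by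
  rw [boxSwap, Equiv.Perm.mul_apply, coordU_conjSwap, coordS_mulPhi_zpow, zpow_natCast]

lemma coordS_boxSwap (n : ℕ) (l : ℤ × ℤ) : coordS (boxSwap n l) = -(φ ^ n * coordU l) := by
  rw [boxSwap, Equiv.Perm.mul_apply, coordS_conjSwap, coordU_mulPhi_zpow, zpow_natCast]

lemma boxSwap_zero (n : ℕ) : boxSwap n 0 = 0 :=
  coordU_injective (by rw [coordU_boxSwap, map_zero, map_zero, mul_zero, neg_zero])

lemma boxSwap_mem_box_iff {n : ℕ} {l : ℤ × ℤ} : boxSwap n l ∈ box n ↔ l ∈ box n := by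
  have hφ := pow_pos goldenRatio_pos n
  simp only [box, mem_ofPred_eq, coordU_boxSwap, coordS_boxSwap, abs_neg, abs_mul,
    abs_goldenConj_pow, abs_of_pos hφ]
  rw [inv_pow, inv_mul_lt_iff₀ hφ, mul_one, mul_lt_iff_lt_one_right hφ, and_comm]

lemma inv_pow_lt_abs_coordU_of_mem_box {n : ℕ} {l : ℤ × ℤ} (hl : l ≠ 0) (hbox : l ∈ box n) :
    φ⁻¹ ^ n < |coordU l| := by
  have hφ := pow_pos goldenRatio_pos n
  have hN := one_le_absNorm hl
  rw [absNorm_eq_mul] at hN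
  rw [inv_pow, inv_lt_iff_one_lt_mul₀' hφ]
  nlinarith [hbox.2, abs_coordU_pos hl]

lemma eq_zero_of_mem_box_zero {l : ℤ × ℤ} (hl : l ∈ box 0) : l = 0 := by
  by_contra hne
  have hlt := inv_pow_lt_abs_coordU_of_mem_box hne hl
  rw [pow_zero] at hlt
  exact hlt.not_gt hl.1

lemma isPerturbation_of_mem_box {n : ℕ} (hn : 3 ≤ n) {l : ℤ × ℤ} (hl : l ≠ 0) (hbox : l ∈ box n) :
    IsPerturbation (φ⁻¹ ^ n) ((ψ / φ) ^ n) (coordS l) (φ ^ n * coordU l) (coordU l + coordS l)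
      (φ ^ n * coordU l + ψ ^ n * coordS l) := by
  have hφ := pow_pos goldenRatio_pos n
  have habs : |φ ^ n * coordU l| = φ ^ n * |coordU l| := by rw [abs_mul, abs_of_pos hφ]
  have hne : boxSwap n l ≠ 0 := boxSwap_zero n ▸ (boxSwap n).injective.ne hl
  have hswap := boxSwap_mem_box_iff.2 hbox
  refine ⟨pow_pos inv_goldenRatio_pos n, inv_goldenRatio_pow_le_quarter hn,
    (abs_goldenConj_div_goldenRatio_pow n).le, one_le_abs_coordS hl hbox.1, ?_, ?_, ?_, ?_, ?_,
    two_le_abs_coordU_add_coordS hl hbox.1, ?_⟩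
  · simpa only [coordS_boxSwap, abs_neg] using one_le_abs_coordS hne hswap.1
  · rw [inv_pow, inv_mul_lt_iff₀ hφ, mul_one]
    exact hbox.2
  · rw [habs, inv_goldenRatio_pow_mul_cancel]
    exact hbox.1
  · rw [add_sub_cancel_right, habs, inv_goldenRatio_pow_mul_cancel]
  · rw [add_sub_cancel_left, abs_mul, abs_goldenConj_pow]
  · have htwo := two_le_abs_coordU_add_coordS hne hswap.1
    rwa [coordU_boxSwap, coordS_boxSwap, ← neg_add, abs_neg, add_comm] at htwo

/-- The summand of the lattice sum: both arguments of `h` are, up to the factor `√5`, integers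
divided by the Fibonacci number `(φ ^ n - ψ ^ n) / √5`. -/
noncomputable def latticeTerm (h : ℝ → ℝ) (σ : ℝ) (n : ℕ) (l : ℤ × ℤ) : ℝ :=
  (φ ^ n - ψ ^ n) ^ σ * (h ((coordU l + coordS l) / (φ ^ n - ψ ^ n)) *
    h ((φ ^ n * coordU l + ψ ^ n * coordS l) / (φ ^ n - ψ ^ n)) * |coordU l + coordS l| ^ (-σ) *
    |φ ^ n * coordU l + ψ ^ n * coordS l| ^ (-σ))

/-- The part of `latticeTerm` which grows linearly in `n` after summation. -/
noncomputable def mainTerm (h : ℝ → ℝ) (σ : ℝ) (n : ℕ) (l : ℤ × ℤ) : ℝ :=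
  h (coordU l) * h (ψ ^ n * coordS l) * absNorm l ^ (-σ)

/-- The correction to `mainTerm` near one of the two sides of the box; `boxSwap` gives the other. -/
noncomputable def edgeTerm (h : ℝ → ℝ) (σ : ℝ) (l : ℤ × ℤ) : ℝ :=
  h 0 * h (coordU l) * (|coordU l + coordS l| ^ (-σ) - |coordS l| ^ (-σ)) * |coordU l| ^ (-σ)

/-- What is left of `latticeTerm` after subtracting `mainTerm` and both `edgeTerm`s. -/
noncomputable def remainder (h : ℝ → ℝ) (σ : ℝ) (n : ℕ) (l : ℤ × ℤ) : ℝ :=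
  latticeTerm h σ n l - mainTerm h σ n l - edgeTerm h σ l - edgeTerm h σ (boxSwap n l)

lemma latticeTerm_zero (h : ℝ → ℝ) {σ : ℝ} (hσ : σ ≠ 0) (n : ℕ) : latticeTerm h σ n 0 = 0 := by
  simp [latticeTerm, zero_rpow (neg_ne_zero.2 hσ)]

lemma mainTerm_zero (h : ℝ → ℝ) {σ : ℝ} (hσ : σ ≠ 0) (n : ℕ) : mainTerm h σ n 0 = 0 := by
  rw [mainTerm, absNorm_zero, zero_rpow (neg_ne_zero.2 hσ), mul_zero]

lemma edgeTerm_zero (h : ℝ → ℝ) {σ : ℝ} (hσ : σ ≠ 0) : edgeTerm h σ 0 = 0 := by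
  simp [edgeTerm, zero_rpow (neg_ne_zero.2 hσ)]

lemma remainder_zero (h : ℝ → ℝ) {σ : ℝ} (hσ : σ ≠ 0) (n : ℕ) : remainder h σ n 0 = 0 := by
  simp [remainder, latticeTerm_zero h hσ, mainTerm_zero h hσ, edgeTerm_zero h hσ, boxSwap_zero]

namespace IsCutoffWeight

variable {h : ℝ → ℝ} {α M L σ : ℝ}

lemma apply_goldenConj_pow_mul (H : IsCutoffWeight h α M L) (n : ℕ) (x : ℝ) :
    h (ψ ^ n * x) = h (φ⁻¹ ^ n * x) := by
  have habs : |ψ ^ n| = |φ⁻¹ ^ n| := by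
    rw [abs_goldenConj_pow, abs_of_pos (pow_pos inv_goldenRatio_pos n)]
  rcases abs_eq_abs.1 habs with heq | heq
  · rw [heq]
  · rw [heq, neg_mul, H.even]

lemma abs_mul_le (H : IsCutoffWeight h α M L) (x y : ℝ) : |h x * h y| ≤ M * M := by
  rw [abs_mul]
  exact mul_le_mul (H.abs_apply_le x) (H.abs_apply_le y) (abs_nonneg _) H.bound_nonneg

lemma remainder_eq (H : IsCutoffWeight h α M L) (σ : ℝ) {n : ℕ} (hn : n ≠ 0)
    (l : ℤ × ℤ) :
    remainder h σ n l = (φ ^ n) ^ σ * summandDefect h σ (φ⁻¹ ^ n) ((ψ / φ) ^ n) (coordS l)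
      (φ ^ n * coordU l) (coordU l + coordS l) (φ ^ n * coordU l + ψ ^ n * coordS l) := by
  have hφ := pow_pos goldenRatio_pos n
  have hφσ : (φ ^ n) ^ σ ≠ 0 := (rpow_pos_of_pos hφ _).ne'
  have hq : 0 < 1 - (ψ / φ) ^ n := by
    have := goldenRatio_pow_sub_goldenConj_pow_pos hn
    rw [goldenRatio_pow_sub_goldenConj_pow_eq] at this
    exact pos_of_mul_pos_right this hφ.le
  have harg : ∀ x, x / (φ ^ n * (1 - (ψ / φ) ^ n)) = φ⁻¹ ^ n * x / (1 - (ψ / φ) ^ n) := fun x => by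
    rw [inv_pow]; field_simp
  have hU : |φ ^ n * coordU l| ^ (-σ) = ((φ ^ n) ^ σ)⁻¹ * |coordU l| ^ (-σ) := by
    rw [abs_mul, abs_of_pos hφ, mul_rpow hφ.le (abs_nonneg _), rpow_neg hφ.le]
  have hS : |ψ ^ n * coordS l| ^ (-σ) = (φ ^ n) ^ σ * |coordS l| ^ (-σ) := by
    rw [abs_mul, abs_goldenConj_pow, mul_rpow (by positivity) (abs_nonneg _), inv_pow,
      inv_rpow hφ.le, rpow_neg hφ.le, inv_inv]
  rw [remainder, latticeTerm, mainTerm, edgeTerm, edgeTerm, summandDefect, coordU_boxSwap,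
    coordS_boxSwap, H.even, ← neg_add, abs_neg, abs_neg, abs_neg, H.apply_goldenConj_pow_mul, hS,
    inv_goldenRatio_pow_mul_cancel, hU, goldenRatio_pow_sub_goldenConj_pow_eq, harg, harg,
    mul_rpow hφ.le hq.le, add_comm (ψ ^ n * coordS l), absNorm_eq_mul,
    mul_rpow (abs_nonneg _) (abs_nonneg _)]
  field_simp

lemma abs_lt_of_apply_div_ne_zero (H : IsCutoffWeight h α M L) {x T : ℝ} (hT : 0 < T)
    (hx : h (x / T) ≠ 0) : |x| < 2 / 3 * T := by
  have hlt := not_le.1 (mt (H.eq_zero _) hx)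
  rwa [abs_div, abs_of_pos hT, div_lt_iff₀ hT] at hlt

lemma latticeTerm_eq_zero (H : IsCutoffWeight h α M L) (σ : ℝ) {n : ℕ} (hn : 3 ≤ n) {l : ℤ × ℤ}
    (hl : l ∉ box n) : latticeTerm h σ n l = 0 := by
  by_contra hne
  have hT := goldenRatio_pow_sub_goldenConj_pow_pos (by omega : n ≠ 0)
  simp only [latticeTerm, mul_ne_zero_iff] at hne
  have hX := H.abs_lt_of_apply_div_ne_zero hT hne.2.1.1.1
  have hY := H.abs_lt_of_apply_div_ne_zero hT hne.2.1.1.2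
  set X := coordU l + coordS l
  set Y := φ ^ n * coordU l + ψ ^ n * coordS l
  set T := φ ^ n - ψ ^ n
  have hε := inv_goldenRatio_pow_le_quarter hn
  have hφ := pow_pos goldenRatio_pos n
  have hφ4 : 4 ≤ φ ^ n := by
    rw [inv_pow] at hε
    exact (inv_le_inv₀ hφ four_pos).1 (by linarith)
  refine hl ⟨lt_of_mul_lt_mul_left (a := T) ?_ hT.le, lt_of_mul_lt_mul_left (a := T) ?_ hT.le⟩
  · nth_rw 1 [← abs_of_pos hT]
    calc |T| * |coordU l| = |Y - ψ ^ n * X| := by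
          rw [← abs_mul]; congr 1; ring
      _ ≤ |Y| + φ⁻¹ ^ n * |X| := by
          rw [← abs_goldenConj_pow, ← abs_mul]; exact abs_sub _ _
      _ ≤ |Y| + 1 / 4 * |X| := by gcongr
      _ < T * 1 := by linarith
  · nth_rw 1 [← abs_of_pos hT]
    calc |T| * |coordS l| = |φ ^ n * X - Y| := by
          rw [← abs_mul]; congr 1; ring
      _ ≤ φ ^ n * |X| + |Y| := by
          nth_rw 2 [← abs_of_pos hφ]; rw [← abs_mul]; exact abs_sub _ _
      _ ≤ φ ^ n * (2 / 3 * T) + 2 / 3 * T := by gcongr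
      _ < T * φ ^ n := by nlinarith

lemma mainTerm_eq_zero (H : IsCutoffWeight h α M L) (σ : ℝ) {n : ℕ} {l : ℤ × ℤ}
    (hl : l ∉ box n) : mainTerm h σ n l = 0 := by
  by_contra hne
  simp only [mainTerm, mul_ne_zero_iff] at hne
  have hU := not_le.1 (mt (H.eq_zero _) hne.1.1)
  have hS := not_le.1 (mt (H.eq_zero _) hne.1.2)
  have hφ := pow_pos goldenRatio_pos n
  rw [abs_mul, abs_goldenConj_pow, inv_pow, inv_mul_lt_iff₀ hφ] at hS
  exact hl ⟨by linarith, by linarith⟩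

lemma edgeTerm_eq_zero (H : IsCutoffWeight h α M L) (σ : ℝ) {l : ℤ × ℤ} (hl : 1 ≤ |coordU l|) :
    edgeTerm h σ l = 0 := by
  rw [edgeTerm, H.eq_zero (coordU l) (by linarith)]; ring

lemma exists_abs_edgeTerm_le (H : IsCutoffWeight h α M L) (σ : ℝ) :
    ∃ C, 0 ≤ C ∧ ∀ l : ℤ × ℤ, l ≠ 0 → |coordU l| < 1 →
      |edgeTerm h σ l| ≤ C * (|coordU l| / |coordS l|) * absNorm l ^ (-σ) := by
  obtain ⟨C, hC, hratio⟩ := exists_abs_rpow_div_sub_one_le (-σ)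
  have hM := H.bound_nonneg
  refine ⟨M * M * C, by positivity, fun l hl hU => ?_⟩
  have hS := one_le_abs_coordS hl hU
  have hX := two_le_abs_coordU_add_coordS hl hU
  have hSpos := abs_coordS_pos hl
  have hXS : |coordU l + coordS l| ≤ |coordU l| + |coordS l| := abs_add_le _ _
  have hSX : |coordS l| ≤ |coordU l + coordS l| + |coordU l| := by
    simpa using abs_sub (coordU l + coordS l) (coordU l)
  have hquot := hratio (coordU l + coordS l) (coordS l) (abs_pos.1 hSpos) (by linarith)
    (by linarith)
  rw [add_sub_cancel_right, div_rpow (abs_nonneg _) (abs_nonneg _)] at hquot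
  have hpow : 0 < |coordS l| ^ (-σ) := rpow_pos_of_pos hSpos _
  calc |edgeTerm h σ l| = |h 0 * h (coordU l)| * (|(|coordU l + coordS l| ^ (-σ)
          / |coordS l| ^ (-σ) - 1)| * |coordS l| ^ (-σ)) * |coordU l| ^ (-σ) := by
        rw [edgeTerm, abs_mul, abs_mul, abs_of_nonneg (a := |coordU l| ^ (-σ)) (by positivity)]
        congr 2
        rw [← abs_of_pos hpow, ← abs_mul, abs_of_pos hpow]
        congr 1
        field_simp
    _ ≤ M * M * (C * (|coordU l| / |coordS l|) * |coordS l| ^ (-σ)) * |coordU l| ^ (-σ) := by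
        gcongr
        exact H.abs_mul_le _ _
    _ = M * M * C * (|coordU l| / |coordS l|) * absNorm l ^ (-σ) := by
        rw [absNorm_eq_mul, mul_rpow (abs_nonneg _) (abs_nonneg _)]; ring

lemma exists_tsum_abs_edgeTerm_compl_box_le (H : IsCutoffWeight h α M L) (hσ : 1 < σ) :
    ∃ C, 0 ≤ C ∧ ∀ n : ℕ, Summable ((box n)ᶜ.indicator (edgeTerm h σ)) ∧
      ∑' l, |(box n)ᶜ.indicator (edgeTerm h σ) l| ≤ C * φ⁻¹ ^ n := by
  obtain ⟨C, hC, hle⟩ := H.exists_abs_edgeTerm_le σ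
  have := inv_goldenRatio_pos
  have hσ0 : σ ≠ 0 := by linarith
  have hbound : ∀ (n : ℕ) (l : ℤ × ℤ), l ≠ 0 → |(box n)ᶜ.indicator (edgeTerm h σ) l| ≤
      C * φ⁻¹ ^ n * ((Ico (0 : ℝ) 1).indicator (· ^ (1 : ℝ)) |coordU l| * absNorm l ^ (-σ)) := by
    intro n l hl
    have hN := absNorm_nonneg l
    have hprofile : 0 ≤ (Ico (0 : ℝ) 1).indicator (· ^ (1 : ℝ)) |coordU l| :=
      indicator_nonneg (fun t ht => rpow_nonneg ht.1 _) _
    by_cases hbox : l ∈ box n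
    · rw [indicator_of_notMem (notMem_compl_iff.2 hbox), abs_zero]
      positivity
    rw [indicator_of_mem hbox]
    rcases lt_or_ge |coordU l| 1 with hU | hU
    · have hS : φ ^ n ≤ |coordS l| := not_lt.1 fun hS => hbox ⟨hU, hS⟩
      rw [indicator_of_mem (s := Ico 0 1) ⟨abs_nonneg _, hU⟩, rpow_one, ← mul_assoc, mul_assoc C]
      refine (hle l hl hU).trans ?_
      gcongr
      rw [div_eq_inv_mul, inv_pow]
      have := pow_pos goldenRatio_pos n
      gcongr
    · rw [H.edgeTerm_eq_zero σ hU, abs_zero]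
      positivity
  refine ⟨C * (2 * (∑' i, eta (i + 1) ^ (-σ)) * ∑' j : ℕ, (φ⁻¹ ^ (1 : ℝ)) ^ j), ?_, fun n => ?_⟩
  · have : 0 ≤ ∑' i, eta (i + 1) ^ (-σ) := tsum_nonneg fun i => rpow_nonneg (eta_succ_pos i).le _
    positivity
  · have := (orbitSumLE_indicator_rpow one_pos).tsum_abs_le_of_coordU hσ (C := C * φ⁻¹ ^ n)
      (by positivity) (by simp [edgeTerm_zero h hσ0]) (hbound n)
    exact ⟨this.1, this.2.trans_eq (by ring)⟩

lemma summable_edgeTerm (H : IsCutoffWeight h α M L) (hσ : 1 < σ) : Summable (edgeTerm h σ) := by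
  obtain ⟨C, -, hle⟩ := H.exists_tsum_abs_edgeTerm_compl_box_le hσ
  have hself : (box 0)ᶜ.indicator (edgeTerm h σ) = edgeTerm h σ :=
    indicator_eq_self.2 fun l hl hbox => hl <| by
      rw [eq_zero_of_mem_box_zero hbox, edgeTerm_zero h (by linarith)]
  exact hself ▸ (hle 0).1

lemma summable_mainTerm (H : IsCutoffWeight h α M L) (hσ : 1 < σ) (n : ℕ) :
    Summable (mainTerm h σ n) := by
  refine ((orbitSumLE_indicator_one n).tsum_abs_le_of_coordU hσ (mul_self_nonneg M)
    (mainTerm_zero h (by linarith) n) fun l hl => ?_).1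
  by_cases hbox : l ∈ box n
  · rw [indicator_of_mem (s := Ioo _ 1) ⟨inv_pow_lt_abs_coordU_of_mem_box hl hbox, hbox.1⟩,
      Pi.one_apply, one_mul, mainTerm, abs_mul,
      abs_of_nonneg (a := absNorm l ^ (-σ)) (rpow_nonneg (absNorm_nonneg l) _)]
    exact mul_le_mul_of_nonneg_right (H.abs_mul_le _ _) (rpow_nonneg (absNorm_nonneg l) _)
  · rw [H.mainTerm_eq_zero σ hbox, abs_zero]
    exact mul_nonneg (mul_self_nonneg M) (mul_nonneg (indicator_nonneg (fun _ _ => zero_le_one) _)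
      (rpow_nonneg (absNorm_nonneg l) _))

end IsCutoffWeight

lemma abs_tsum_le_tsum_abs {ι : Type*} {F : ι → ℝ} (hF : Summable F) :
    |∑' i, F i| ≤ ∑' i, |F i| := by
  simpa only [Real.norm_eq_abs] using norm_tsum_le_tsum_norm hF.norm

namespace IsCutoffWeight

variable {h : ℝ → ℝ} {α β M L σ : ℝ}

lemma exists_abs_remainder_le (H : IsCutoffWeight h α M L) (hβ : 0 ≤ β) (hβα : β ≤ α)
    (hα1 : α ≤ 1) (σ : ℝ) :
    ∃ C, 0 ≤ C ∧ ∀ n : ℕ, 3 ≤ n → ∀ l : ℤ × ℤ, l ≠ 0 → l ∈ box n →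
      |remainder h σ n l| ≤ C * (φ⁻¹ ^ n) ^ (β / 2) * absNorm l ^ (-(σ - β / 2)) := by
  obtain ⟨C, hC, hle⟩ := H.exists_abs_summandDefect_le hβ hβα hα1 σ
  refine ⟨C, hC, fun n hn l hl hbox => ?_⟩
  have hφ := pow_pos goldenRatio_pos n
  have hφσ := rpow_pos_of_pos hφ σ
  have hφinv := pow_pos inv_goldenRatio_pos n
  have hN := absNorm_pos hl
  have hprod : |coordS l * (φ ^ n * coordU l)| = φ ^ n * absNorm l := by
    rw [mul_left_comm, abs_mul, abs_of_pos hφ, mul_comm (coordS l), absNorm]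
  have hdefect := hle _ _ _ _ _ _ (isPerturbation_of_mem_box hn hl hbox)
  rw [hprod, sq, mul_assoc, inv_goldenRatio_pow_mul_cancel] at hdefect
  calc |remainder h σ n l|
      ≤ (φ ^ n) ^ σ * (C * ((φ⁻¹ ^ n * absNorm l) ^ (β / 2) * (φ ^ n * absNorm l) ^ (-σ))) := by
        rw [H.remainder_eq σ (by omega), abs_mul, abs_of_pos hφσ]
        exact mul_le_mul_of_nonneg_left hdefect hφσ.le
    _ = C * (φ⁻¹ ^ n) ^ (β / 2) * absNorm l ^ (-(σ - β / 2)) := by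
        rw [mul_rpow hφinv.le hN.le, mul_rpow hφ.le hN.le, rpow_neg hφ.le, neg_sub, sub_eq_add_neg,
          rpow_add hN]
        field_simp

lemma exists_tsum_abs_remainder_box_le (H : IsCutoffWeight h α M L) (hβ : 0 ≤ β) (hβα : β ≤ α)
    (hα1 : α ≤ 1) (hσ : 0 < σ) (hβσ : 1 < σ - β / 2) :
    ∃ C, 0 ≤ C ∧ ∀ n : ℕ, 3 ≤ n → Summable ((box n).indicator (remainder h σ n)) ∧
      ∑' l, |(box n).indicator (remainder h σ n) l| ≤ C * n * (φ⁻¹ ^ n) ^ (β / 2) := by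
  obtain ⟨C, hC, hle⟩ := H.exists_abs_remainder_le hβ hβα hα1 σ
  have hη : 0 ≤ ∑' i, eta (i + 1) ^ (-(σ - β / 2)) :=
    tsum_nonneg fun i => rpow_nonneg (eta_succ_pos i).le _
  refine ⟨C * (2 * ∑' i, eta (i + 1) ^ (-(σ - β / 2))), by positivity, fun n hn => ?_⟩
  have hε : 0 ≤ (φ⁻¹ ^ n) ^ (β / 2) := by have := inv_goldenRatio_pos; positivity
  have hsum := (orbitSumLE_indicator_one n).tsum_abs_le_of_coordU hβσ (mul_nonneg hC hε)
    (F := (box n).indicator (remainder h σ n)) (by simp [remainder_zero h hσ.ne']) fun l hl => by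
      have hN := rpow_nonneg (absNorm_nonneg l) (-(σ - β / 2))
      by_cases hbox : l ∈ box n
      · rw [indicator_of_mem hbox, indicator_of_mem (s := Ioo _ 1)
          ⟨inv_pow_lt_abs_coordU_of_mem_box hl hbox, hbox.1⟩, Pi.one_apply, one_mul]
        exact hle n hn l hl hbox
      · rw [indicator_of_notMem hbox, abs_zero]
        exact mul_nonneg (mul_nonneg hC hε)
          (mul_nonneg (indicator_nonneg (fun _ _ => zero_le_one) _) hN)
  exact ⟨hsum.1, hsum.2.trans_eq (by ring)⟩

lemma remainder_eq_sub_indicator (H : IsCutoffWeight h α M L) (σ : ℝ) {n : ℕ} (hn : 3 ≤ n)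
    (l : ℤ × ℤ) :
    remainder h σ n l = (box n).indicator (remainder h σ n) l
      - (box n)ᶜ.indicator (edgeTerm h σ) l - (box n)ᶜ.indicator (edgeTerm h σ) (boxSwap n l) := by
  by_cases hbox : l ∈ box n
  · rw [indicator_of_mem hbox, indicator_of_notMem (notMem_compl_iff.2 hbox),
      indicator_of_notMem (notMem_compl_iff.2 (boxSwap_mem_box_iff.2 hbox)), sub_zero, sub_zero]
  · rw [indicator_of_notMem hbox, indicator_of_mem hbox,
      indicator_of_mem (s := (box n)ᶜ) (mt boxSwap_mem_box_iff.1 hbox), remainder,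
      H.latticeTerm_eq_zero σ hn hbox, H.mainTerm_eq_zero σ hbox, sub_zero]

lemma exists_abs_tsum_remainder_le (H : IsCutoffWeight h α M L) (hβ : 0 ≤ β) (hβα : β ≤ α)
    (hα1 : α ≤ 1) (hβσ : 1 < σ - β / 2) :
    ∃ C, 0 ≤ C ∧ ∀ n : ℕ, 3 ≤ n → Summable (remainder h σ n) ∧
      |∑' l, remainder h σ n l| ≤ C * (n * (φ⁻¹ ^ n) ^ (β / 2)) := by
  have hσ : 1 < σ := by linarith
  obtain ⟨C, hC, hinside⟩ := H.exists_tsum_abs_remainder_box_le hβ hβα hα1 (by linarith) hβσ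
  obtain ⟨C', hC', houtside⟩ := H.exists_tsum_abs_edgeTerm_compl_box_le hσ
  refine ⟨C + 2 * C', by positivity, fun n hn => ?_⟩
  have hε := pow_pos inv_goldenRatio_pos n
  obtain ⟨hin, hin_le⟩ := hinside n hn
  obtain ⟨hout, hout_le⟩ := houtside n
  have hout' := (boxSwap n).summable_iff.2 hout
  have hout'_le := hout_le
  rw [← (boxSwap n).tsum_eq] at hout'_le
  have hsum := ((hin.hasSum.sub hout.hasSum).sub hout'.hasSum).congr_fun
    (fun l => H.remainder_eq_sub_indicator σ hn l)
  refine ⟨hsum.summable, ?_⟩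
  have hpow : φ⁻¹ ^ n ≤ n * (φ⁻¹ ^ n) ^ (β / 2) := by
    have hone : (1 : ℝ) ≤ n := by exact_mod_cast (by omega : 1 ≤ n)
    have hself := self_le_rpow_of_le_one hε.le
      ((inv_goldenRatio_pow_le_quarter hn).trans (by norm_num)) (by linarith : β / 2 ≤ 1)
    exact hself.trans (le_mul_of_one_le_left (hε.le.trans hself) hone)
  calc |∑' l, remainder h σ n l|
      ≤ |∑' l, (box n).indicator (remainder h σ n) l|
          + |∑' l, (box n)ᶜ.indicator (edgeTerm h σ) l|
          + |∑' l, (box n)ᶜ.indicator (edgeTerm h σ) (boxSwap n l)| := by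
        rw [hsum.tsum_eq]
        exact (abs_sub _ _).trans (add_le_add_left (abs_sub _ _) _)
    _ ≤ C * n * (φ⁻¹ ^ n) ^ (β / 2) + C' * φ⁻¹ ^ n + C' * φ⁻¹ ^ n :=
        add_le_add_three ((abs_tsum_le_tsum_abs hin).trans hin_le)
          ((abs_tsum_le_tsum_abs hout).trans hout_le)
          ((abs_tsum_le_tsum_abs hout').trans hout'_le)
    _ ≤ (C + 2 * C') * (n * (φ⁻¹ ^ n) ^ (β / 2)) := by
        linarith [mul_le_mul_of_nonneg_left hpow hC']

theorem exists_abs_tsum_latticeTerm_sub_le (H : IsCutoffWeight h α M L) (hβ : 0 ≤ β) (hβα : β ≤ α)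
    (hα1 : α ≤ 1) (hβσ : 1 < σ - β / 2) :
    ∃ C, 0 ≤ C ∧ ∀ n : ℕ, 3 ≤ n →
      |∑' l, latticeTerm h σ n l - ∑' l, mainTerm h σ n l - 2 * ∑' l, edgeTerm h σ l| ≤
        C * (n * (φ⁻¹ ^ n) ^ (β / 2)) := by
  obtain ⟨C, hC, hrem⟩ := H.exists_abs_tsum_remainder_le hβ hβα hα1 hβσ
  have hσ : 1 < σ := by linarith
  refine ⟨C, hC, fun n hn => ?_⟩
  obtain ⟨hsum, hle⟩ := hrem n hn
  have hedge := (H.summable_edgeTerm hσ).hasSum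
  have hedge' := (boxSwap n).hasSum_iff.2 hedge
  have hlattice := ((hsum.hasSum.add (H.summable_mainTerm hσ n).hasSum).add hedge).add hedge'
  have hlattice_eq : ∑' l, latticeTerm h σ n l =
      ∑' l, remainder h σ n l + ∑' l, mainTerm h σ n l + ∑' l, edgeTerm h σ l
        + ∑' l, edgeTerm h σ l := by
    rw [← hlattice.tsum_eq]
    exact tsum_congr fun l => by simp only [remainder, Function.comp_apply]; ring
  convert hle using 2
  linarith

end IsCutoffWeight

/-! ### Linear growth of the main term -/

lemma tsum_add_one_sub_of_tendsto {G : Type*} [AddCommGroup G] [TopologicalSpace G]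
    [IsTopologicalAddGroup G] [T2Space G] {g : ℤ → G} {a b : G}
    (hsum : Summable fun k => g (k + 1) - g k) (ha : Tendsto g atTop (𝓝 a))
    (hb : Tendsto g atBot (𝓝 b)) : ∑' k, (g (k + 1) - g k) = a - b := by
  have hpartial (n : ℕ) : ∑ k ∈ Finset.Ico (-n : ℤ) n, (g (k + 1) - g k) = g n - g (-n) := by
    rw [← neg_sub (g (-n)), ← Finset.sum_Ico_int_sub, ← Finset.sum_neg_distrib]
    simp only [neg_sub]
  have hcast : Tendsto (Nat.cast : ℕ → ℤ) atTop atTop := tendsto_natCast_atTop_atTop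
  refine tendsto_nhds_unique (hsum.hasSum.comp Finset.tendsto_Ico_neg) ?_
  simp only [Function.comp_def, hpartial]
  exact (ha.comp hcast).sub (hb.comp (tendsto_neg_atTop_atBot.comp hcast))

lemma exists_abs_sub_mul_sub_le_geometric {x : ℕ → ℝ} {c K ρ : ℝ} (hρ : ρ < 1)
    (hx : ∀ n, |x (n + 1) - x n - c| ≤ K * ρ ^ n) :
    ∃ D K', 0 ≤ K' ∧ ∀ n : ℕ, |x n - c * n - D| ≤ K' * ρ ^ n := by
  have hK : 0 ≤ K := by simpa using (abs_nonneg _).trans (hx 0)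
  have hdist : ∀ n, dist (x n - c * n) (x (n + 1) - c * (n + 1 : ℕ)) ≤ K * ρ ^ n := fun n => by
    rw [dist_comm, Real.dist_eq]
    convert hx n using 2
    push_cast
    ring
  obtain ⟨D, hD⟩ := cauchySeq_tendsto_of_complete (cauchySeq_of_le_geometric ρ K hρ hdist)
  refine ⟨D, K / (1 - ρ), div_nonneg hK (sub_nonneg.2 hρ.le), fun n => ?_⟩
  have hle := dist_le_of_le_geometric_of_tendsto ρ K hρ hdist hD n
  rwa [Real.dist_eq, mul_div_right_comm] at hle

lemma IsBoundedHolder.continuous {g : ℝ → ℝ} {α M L : ℝ} (hg : IsBoundedHolder g α M L)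
    (hα : 0 < α) : Continuous g := by
  refine continuous_iff_continuousAt.2 fun s => tendsto_iff_dist_tendsto_zero.2 ?_
  have hmaj : Continuous fun t => L * |t - s| ^ α := by fun_prop (disch := exact hα.le)
  refine squeeze_zero (fun _ => dist_nonneg) (fun t => hg.abs_sub_le t s) ?_
  simpa [zero_rpow hα.ne'] using hmaj.tendsto s

/-- The increment along multiplication by `φ` of the limiting main term in which the factor
depending on `coordU` is frozen at `h 0`, divided by `h 0`. -/
noncomputable def stepTerm (h : ℝ → ℝ) (σ : ℝ) (l : ℤ × ℤ) : ℝ :=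
  (h (coordS l) - h (ψ⁻¹ * coordS l)) * absNorm l ^ (-σ)

lemma stepTerm_zero (h : ℝ → ℝ) {σ : ℝ} (hσ : σ ≠ 0) : stepTerm h σ 0 = 0 := by
  rw [stepTerm, absNorm_zero, zero_rpow (neg_ne_zero.2 hσ), mul_zero]

namespace IsCutoffWeight

variable {h : ℝ → ℝ} {α β M L σ : ℝ}

lemma apply_units_mul (H : IsCutoffWeight h α M L) (s : ℤˣ) (x : ℝ) : h ((s : ℤ) * x) = h x := by
  rcases Int.units_eq_one_or s with rfl | rfl
  · simp
  · simp [H.even]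

lemma tendsto_goldenConj_zpow_mul_atTop (H : IsCutoffWeight h α M L) (hα : 0 < α) (s : ℝ) :
    Tendsto (fun k : ℤ => h (ψ ^ k * s)) atTop (𝓝 (h 0)) := by
  refine ((H.continuous hα).tendsto 0).comp ?_
  have hψ : |ψ| < 1 := abs_goldenConj ▸ inv_goldenRatio_lt_one
  rw [← Nat.map_cast_int_atTop, tendsto_map'_iff, ← zero_mul s]
  simpa only [Function.comp_def, zpow_natCast] using
    (tendsto_pow_atTop_nhds_zero_of_abs_lt_one hψ).mul_const s

lemma tendsto_goldenConj_zpow_mul_atBot (H : IsCutoffWeight h α M L) {s : ℝ} (hs : s ≠ 0) :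
    Tendsto (fun k : ℤ => h (ψ ^ k * s)) atBot (𝓝 0) := by
  have hgrowth : Tendsto (fun n : ℕ => φ ^ n * |s|) atTop atTop :=
    (tendsto_pow_atTop_atTop_of_one_lt one_lt_goldenRatio).atTop_mul_const (abs_pos.2 hs)
  rw [← map_neg_atTop, tendsto_map'_iff, ← Nat.map_cast_int_atTop, tendsto_map'_iff]
  refine tendsto_const_nhds.congr' ?_
  filter_upwards [hgrowth.eventually_ge_atTop (2 / 3)] with n hn
  refine (H.eq_zero _ ?_).symm
  rwa [zpow_neg, abs_mul, abs_inv, zpow_natCast, abs_goldenConj_pow, inv_pow, inv_inv]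

lemma stepTerm_eq_zero (H : IsCutoffWeight h α M L) (σ : ℝ) {l : ℤ × ℤ} (hl : 1 ≤ |coordS l|) :
    stepTerm h σ l = 0 := by
  have hφ : |ψ⁻¹ * coordS l| = φ * |coordS l| := by
    rw [abs_mul, abs_inv, abs_goldenConj, inv_inv]
  have := one_lt_goldenRatio
  rw [stepTerm, H.eq_zero _ (by linarith), H.eq_zero _ (by rw [hφ]; nlinarith), sub_zero, zero_mul]

lemma abs_stepTerm_le (H : IsCutoffWeight h α M L) (hα : 0 ≤ α) (hα1 : α ≤ 1) (σ : ℝ)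
    (l : ℤ × ℤ) : |stepTerm h σ l| ≤ 4 * L * (|coordS l| ^ α * absNorm l ^ (-σ)) := by
  have hN := rpow_nonneg (absNorm_nonneg l) (-σ)
  have hφ := goldenRatio_lt_two
  have hdist : |coordS l - ψ⁻¹ * coordS l| ≤ 4 * |coordS l| := by
    rw [inv_goldenConj, ← one_sub_mul, sub_neg_eq_add, abs_mul,
      abs_of_pos (add_pos one_pos goldenRatio_pos)]
    gcongr
    linarith
  rw [stepTerm, abs_mul, abs_of_nonneg hN, ← mul_assoc]
  exact mul_le_mul_of_nonneg_right
    (H.abs_sub_le_four_mul hα hα1 (abs_nonneg _) hdist) hN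

lemma summable_stepTerm (H : IsCutoffWeight h α M L) (hα : 0 < α) (hα1 : α ≤ 1) (hσ : 1 < σ) :
    Summable (stepTerm h σ) := by
  refine ((orbitSumLE_indicator_rpow hα).tsum_abs_le_of_coordS hσ
    (mul_nonneg four_pos.le H.const_nonneg) (stepTerm_zero h (by linarith)) fun l _ => ?_).1
  by_cases hl : |coordS l| < 1
  · rw [indicator_of_mem (s := Ico 0 1) ⟨abs_nonneg _, hl⟩]
    exact H.abs_stepTerm_le hα.le hα1 σ l
  · rw [H.stepTerm_eq_zero σ (not_lt.1 hl), indicator_of_notMem fun hmem => hl hmem.2]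
    simp

lemma stepTerm_orbitPoint (H : IsCutoffWeight h α M L) (σ : ℝ) (i : ℕ) (k : ℤ) (s : ℤˣ) :
    stepTerm h σ (orbitPoint (i, k, s)) =
      eta (i + 1) ^ (-σ) * (h (ψ ^ k * coordS (wythoffPoint i))
        - h (ψ ^ (k - 1) * coordS (wythoffPoint i))) := by
  rw [stepTerm, absNorm_orbitPoint, coordS_orbitPoint, mul_left_comm ψ⁻¹, H.apply_units_mul,
    H.apply_units_mul, ← mul_assoc ψ⁻¹, ← zpow_neg_one, ← zpow_add₀ goldenConj_ne_zero,
    neg_add_eq_sub, mul_comm]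

lemma tsum_stepTerm_row (H : IsCutoffWeight h α M L) (hα : 0 < α) (i : ℕ)
    (hsum : Summable fun p : ℤ × ℤˣ => stepTerm h σ (orbitPoint (i, p))) :
    ∑' p : ℤ × ℤˣ, stepTerm h σ (orbitPoint (i, p)) = 2 * h 0 * eta (i + 1) ^ (-σ) := by
  have hη := rpow_pos_of_pos (eta_succ_pos i) (-σ)
  set g : ℤ → ℝ := fun k => h (ψ ^ (k - 1) * coordS (wythoffPoint i)) with hg
  have hterm : ∀ k s, stepTerm h σ (orbitPoint (i, k, s)) =
      eta (i + 1) ^ (-σ) * (g (k + 1) - g k) := fun k s => by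
    rw [H.stepTerm_orbitPoint, hg]
    simp only [add_sub_cancel_right]
  have hne : coordS (wythoffPoint i) ≠ 0 := fun h0 =>
    (coordS_wythoffPoint_mem i).2.not_ge (h0 ▸ neg_nonpos.2 inv_goldenRatio_pos.le)
  have hdiff : Summable fun k => g (k + 1) - g k := by
    have hone := hsum.comp_injective (i := fun k : ℤ => (k, (1 : ℤˣ)))
      fun _ _ h => congrArg Prod.fst h
    simp only [Function.comp_def, hterm] at hone
    exact (summable_mul_left_iff hη.ne').1 hone
  have htelescope : ∑' k, (g (k + 1) - g k) = h 0 - 0 :=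
    tsum_add_one_sub_of_tendsto hdiff
      ((H.tendsto_goldenConj_zpow_mul_atTop hα _).comp
        (tendsto_atTop_add_const_right _ _ tendsto_id))
      ((H.tendsto_goldenConj_zpow_mul_atBot hne).comp
        (tendsto_atBot_add_const_right _ _ tendsto_id))
  rw [hsum.tsum_prod]
  simp only [hterm, tsum_fintype, Finset.sum_const, nsmul_eq_mul, tsum_mul_left, htelescope,
    Finset.card_univ, Fintype.card_units_int, Nat.cast_ofNat, sub_zero]
  ring

lemma tsum_stepTerm (H : IsCutoffWeight h α M L) (hα : 0 < α) (hα1 : α ≤ 1) (hσ : 1 < σ) :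
    ∑' l, stepTerm h σ l = 2 * h 0 * ∑' i, eta (i + 1) ^ (-σ) := by
  have hsum := (H.summable_stepTerm hα hα1 hσ).comp_injective orbitPoint_injective
  rw [← tsum_orbitPoint (stepTerm_zero h (by linarith)), ← tsum_mul_left]
  exact hsum.tsum_prod.trans (tsum_congr fun i => H.tsum_stepTerm_row hα i (hsum.prod_factor i))

lemma abs_sub_mul_stepTerm_le (H : IsCutoffWeight h α M L) (hβ : 0 ≤ β) (hβα : β ≤ α)
    (hα1 : α ≤ 1) (σ : ℝ) {ε : ℝ} (hε : 0 ≤ ε) {l : ℤ × ℤ} (hl : l ≠ 0) :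
    |(h (ε * coordU l) - h 0) * stepTerm h σ l| ≤ (L + 2 * M) * (4 * L) * ε ^ (β / 2) *
      (|coordS l| ^ (α - β / 2) * absNorm l ^ (-(σ - β / 2))) := by
  have hL := H.const_nonneg
  have hM := H.bound_nonneg
  have hU := abs_coordU_pos hl
  have hS := abs_coordS_pos hl
  have hfreeze : |h (ε * coordU l) - h 0| ≤ (L + 2 * M) * (ε * |coordU l|) ^ (β / 2) := by
    have hle := (H.of_exponent_le (by linarith) (by linarith : β / 2 ≤ α)).abs_sub_le
      (ε * coordU l) 0
    rwa [sub_zero, abs_mul, abs_of_nonneg hε] at hle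
  calc |(h (ε * coordU l) - h 0) * stepTerm h σ l|
      ≤ (L + 2 * M) * (ε * |coordU l|) ^ (β / 2) *
          (4 * L * (|coordS l| ^ α * absNorm l ^ (-σ))) := by
        rw [abs_mul]
        exact mul_le_mul hfreeze (H.abs_stepTerm_le (hβ.trans hβα) hα1 σ l) (abs_nonneg _)
          (by positivity)
    _ = (L + 2 * M) * (4 * L) * ε ^ (β / 2) *
          (|coordS l| ^ (α - β / 2) * absNorm l ^ (-(σ - β / 2))) := by
        rw [neg_sub, sub_eq_add_neg (β / 2), rpow_add (absNorm_pos hl),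
          ← sub_add_cancel α (β / 2), rpow_add hS, sub_add_cancel, absNorm_eq_mul,
          mul_rpow hε hU.le, mul_rpow (z := β / 2) hU.le hS.le]
        ring

lemma exists_tsum_abs_sub_mul_stepTerm_le (H : IsCutoffWeight h α M L) (hβ : 0 < β) (hβα : β ≤ α)
    (hα1 : α ≤ 1) (hβσ : 1 < σ - β / 2) :
    ∃ C, 0 ≤ C ∧ ∀ ε, 0 ≤ ε → (Summable fun l => (h (ε * coordU l) - h 0) * stepTerm h σ l) ∧
      ∑' l, |(h (ε * coordU l) - h 0) * stepTerm h σ l| ≤ C * ε ^ (β / 2) := by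
  have hL := H.const_nonneg
  have hM := H.bound_nonneg
  have hη : 0 ≤ ∑' i, eta (i + 1) ^ (-(σ - β / 2)) :=
    tsum_nonneg fun i => rpow_nonneg (eta_succ_pos i).le _
  have : 0 ≤ ∑' j : ℕ, (φ⁻¹ ^ (α - β / 2)) ^ j :=
    tsum_nonneg fun j => pow_nonneg (rpow_nonneg inv_goldenRatio_pos.le _) j
  refine ⟨(L + 2 * M) * (4 * L) * (2 * (∑' i, eta (i + 1) ^ (-(σ - β / 2))) *
    ∑' j : ℕ, (φ⁻¹ ^ (α - β / 2)) ^ j), by positivity, fun ε hε => ?_⟩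
  have hC : 0 ≤ (L + 2 * M) * (4 * L) * ε ^ (β / 2) := by positivity
  have hbound := (orbitSumLE_indicator_rpow (by linarith : 0 < α - β / 2)).tsum_abs_le_of_coordS
    hβσ hC (F := fun l => (h (ε * coordU l) - h 0) * stepTerm h σ l)
    (by simp only [stepTerm_zero h (by linarith : σ ≠ 0), mul_zero]) fun l hl => by
      by_cases hS : |coordS l| < 1
      · rw [indicator_of_mem (s := Ico 0 1) ⟨abs_nonneg _, hS⟩]
        exact H.abs_sub_mul_stepTerm_le hβ.le hβα hα1 σ hε hl
      · rw [H.stepTerm_eq_zero σ (not_lt.1 hS), indicator_of_notMem fun hmem => hS hmem.2]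
        simp
  exact ⟨hbound.1, hbound.2.trans_eq (by ring)⟩

lemma mainTerm_succ_sub_mainTerm (h : ℝ → ℝ) (σ : ℝ) (n : ℕ) (l : ℤ × ℤ) :
    mainTerm h σ (n + 1) ((mulPhi ^ (-(n + 1 : ℕ) : ℤ)) l)
      - mainTerm h σ n ((mulPhi ^ (-(n + 1 : ℕ) : ℤ)) l) =
    h 0 * stepTerm h σ l + (h (φ⁻¹ ^ (n + 1) * coordU l) - h 0) * stepTerm h σ l := by
  have hψ := pow_ne_zero n goldenConj_ne_zero
  have hcancel : ψ ^ (n + 1) * (ψ ^ (-(n + 1 : ℕ) : ℤ) * coordS l) = coordS l := by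
    rw [zpow_neg, zpow_natCast, mul_inv_cancel_left₀ (pow_ne_zero _ goldenConj_ne_zero)]
  have hshift : ψ ^ n * (ψ ^ (-(n + 1 : ℕ) : ℤ) * coordS l) = ψ⁻¹ * coordS l := by
    rw [zpow_neg, zpow_natCast, pow_succ, mul_inv, mul_assoc, mul_inv_cancel_left₀ hψ]
  rw [mainTerm, mainTerm, absNorm_mulPhi_zpow, coordU_mulPhi_zpow, coordS_mulPhi_zpow, hcancel,
    hshift, zpow_neg, zpow_natCast, ← inv_pow, stepTerm]
  ring

lemma tsum_mainTerm_succ_sub (H : IsCutoffWeight h α M L) (hα : 0 < α) (hα1 : α ≤ 1) (hσ : 1 < σ)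
    (n : ℕ) (hsum : Summable fun l => (h (φ⁻¹ ^ (n + 1) * coordU l) - h 0) * stepTerm h σ l) :
    ∑' l, mainTerm h σ (n + 1) l - ∑' l, mainTerm h σ n l =
      2 * h 0 ^ 2 * ∑' i, eta (i + 1) ^ (-σ)
        + ∑' l, (h (φ⁻¹ ^ (n + 1) * coordU l) - h 0) * stepTerm h σ l := by
  rw [← (H.summable_mainTerm hσ (n + 1)).tsum_sub (H.summable_mainTerm hσ n),
    ← Equiv.tsum_eq (mulPhi ^ (-(n + 1 : ℕ) : ℤ))]
  simp only [mainTerm_succ_sub_mainTerm]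
  rw [((H.summable_stepTerm hα hα1 hσ).mul_left _).tsum_add hsum, tsum_mul_left,
    H.tsum_stepTerm hα hα1 hσ]
  ring

lemma exists_abs_tsum_mainTerm_succ_sub_le (H : IsCutoffWeight h α M L) (hβ : 0 < β) (hβα : β ≤ α)
    (hα1 : α ≤ 1) (hβσ : 1 < σ - β / 2) :
    ∃ C, ∀ n : ℕ, |∑' l, mainTerm h σ (n + 1) l - ∑' l, mainTerm h σ n l
      - 2 * h 0 ^ 2 * ∑' i, eta (i + 1) ^ (-σ)| ≤ C * (φ⁻¹ ^ (β / 2)) ^ n := by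
  obtain ⟨C, hC, hle⟩ := H.exists_tsum_abs_sub_mul_stepTerm_le hβ hβα hα1 hβσ
  refine ⟨C, fun n => ?_⟩
  have hφ := inv_goldenRatio_pos.le
  obtain ⟨hsum, hle⟩ := hle (φ⁻¹ ^ (n + 1)) (pow_nonneg hφ _)
  rw [H.tsum_mainTerm_succ_sub (hβ.trans_le hβα) hα1 (by linarith) n hsum, add_sub_cancel_left,
    rpow_pow_comm hφ]
  refine (abs_tsum_le_tsum_abs hsum).trans (hle.trans (mul_le_mul_of_nonneg_left ?_ hC))
  exact rpow_le_rpow (pow_nonneg hφ _)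
    (pow_le_pow_of_le_one hφ inv_goldenRatio_lt_one.le n.le_succ) (half_pos hβ).le

theorem exists_abs_tsum_latticeTerm_sub_linear_le (H : IsCutoffWeight h α M L) (hβ : 0 < β)
    (hβα : β ≤ α) (hα1 : α ≤ 1) (hβσ : 1 < σ - β / 2) :
    ∃ D K, 0 ≤ K ∧ ∀ n : ℕ, 3 ≤ n →
      |∑' l, latticeTerm h σ n l - 2 * h 0 ^ 2 * (∑' i, eta (i + 1) ^ (-σ)) * n - D| ≤
        K * ((n + 1) * (φ⁻¹ ^ n) ^ (β / 2)) := by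
  have hφ := inv_goldenRatio_pos.le
  obtain ⟨C, hC, hlattice⟩ := H.exists_abs_tsum_latticeTerm_sub_le hβ.le hβα hα1 hβσ
  obtain ⟨C', hstep⟩ := H.exists_abs_tsum_mainTerm_succ_sub_le hβ hβα hα1 hβσ
  obtain ⟨D, K, hK, hmain⟩ := exists_abs_sub_mul_sub_le_geometric
    (x := fun n => ∑' l, mainTerm h σ n l)
    (rpow_lt_one hφ inv_goldenRatio_lt_one (half_pos hβ)) hstep
  refine ⟨D + 2 * ∑' l, edgeTerm h σ l, C + K, add_nonneg hC hK, fun n hn => ?_⟩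
  have hε : 0 ≤ (φ⁻¹ ^ n) ^ (β / 2) := rpow_nonneg (pow_nonneg hφ n) _
  have hmain := hmain n
  rw [rpow_pow_comm hφ] at hmain
  calc _ = |(∑' l, latticeTerm h σ n l - ∑' l, mainTerm h σ n l - 2 * ∑' l, edgeTerm h σ l)
        + (∑' l, mainTerm h σ n l - 2 * h 0 ^ 2 * (∑' i, eta (i + 1) ^ (-σ)) * n - D)| := by
        ring_nf
    _ ≤ C * (n * (φ⁻¹ ^ n) ^ (β / 2)) + K * (φ⁻¹ ^ n) ^ (β / 2) :=
        (abs_add_le _ _).trans (add_le_add (hlattice n hn) hmain)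
    _ ≤ (C + K) * ((n + 1) * (φ⁻¹ ^ n) ^ (β / 2)) := by
        have := mul_nonneg hC hε
        have := mul_nonneg hK (mul_nonneg n.cast_nonneg hε)
        linarith

end IsCutoffWeight

/-! ### From Fibonacci sums to lattice sums -/

lemma sinc_eq_integral_cos (x : ℝ) : sinc x = ∫ t in 0..1, cos (x * t) := by
  rcases eq_or_ne x 0 with rfl | hx
  · simp
  · rw [intervalIntegral.integral_comp_mul_left _ hx, integral_cos, sinc_of_ne_zero hx]
    simp [div_eq_inv_mul]

lemma abs_sinc_sub_sinc_le (x y : ℝ) : |sinc x - sinc y| ≤ |x - y| := by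
  have hint (z : ℝ) : IntervalIntegrable (fun t => cos (z * t)) MeasureTheory.volume 0 1 :=
    Continuous.intervalIntegrable (by fun_prop) _ _
  have hbound : ∀ t ∈ uIoc (0 : ℝ) 1, ‖cos (x * t) - cos (y * t)‖ ≤ |x - y| := by
    intro t ht
    rw [uIoc_of_le zero_le_one] at ht
    calc |cos (x * t) - cos (y * t)| ≤ |x * t - y * t| := abs_cos_sub_cos_le _ _
      _ = |x - y| * t := by rw [← sub_mul, abs_mul, abs_of_pos ht.1]
      _ ≤ |x - y| := mul_le_of_le_one_right (abs_nonneg _) ht.2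
  rw [sinc_eq_integral_cos, sinc_eq_integral_cos, ← intervalIntegral.integral_sub (hint x) (hint y)]
  simpa using intervalIntegral.norm_integral_le_of_norm_le_const hbound

lemma quarter_le_sinc {x : ℝ} (hx : |x| ≤ 2 * π / 3) : 1 / 4 ≤ sinc x := by
  rw [← show sinc |x| = sinc x by rcases abs_choice x with h | h <;> rw [h]; exact sinc_neg x]
  have hπ := pi_pos
  have hπ4 := pi_le_four
  rcases (abs_nonneg x).eq_or_lt with h | hpos
  · rw [← h, sinc_zero]
    norm_num
  · rw [sinc_of_ne_zero hpos.ne', le_div_iff₀ hpos]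
    rcases le_total |x| (π / 2) with hle | hge
    · refine le_trans (mul_le_mul_of_nonneg_right ?_ hpos.le) (mul_le_sin hpos.le hle)
      rw [div_le_div_iff₀ (by norm_num) hπ]
      linarith
    · calc 1 / 4 * |x| ≤ 2 / π * (π / 3) := by
            field_simp
            linarith
        _ ≤ 2 / π * (π - |x|) := by gcongr; linarith
        _ ≤ sin (π - |x|) := mul_le_sin (by linarith) (by linarith)
        _ = sin |x| := sin_pi_sub _

/-- The weight `(π|t| / |sin (π t)|) ^ σ` where `|t| ≤ 2 / 3`, extended to a Lipschitz function on
the line by bounding `sinc` from below. -/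
noncomputable def sincWeight (σ t : ℝ) : ℝ := max (1 / 4) (sinc (π * t)) ^ (-σ)

lemma sincWeight_zero (σ : ℝ) : sincWeight σ 0 = 1 := by
  rw [sincWeight, mul_zero, sinc_zero, max_eq_right (by norm_num), one_rpow]

lemma sincWeight_neg (σ t : ℝ) : sincWeight σ (-t) = sincWeight σ t := by
  rw [sincWeight, mul_neg, sinc_neg, sincWeight]

lemma sincWeight_mul_rpow (σ : ℝ) {t : ℝ} (h0 : t ≠ 0) (ht : |t| ≤ 2 / 3) :
    sincWeight σ t * (π * |t|) ^ (-σ) = (|sin (π * t)| ^ σ)⁻¹ := by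
  have hπt : |π * t| = π * |t| := by rw [abs_mul, abs_of_pos pi_pos]
  have hsinc : 1 / 4 ≤ sinc (π * t) := quarter_le_sinc (by rw [hπt]; nlinarith [pi_pos])
  have habs : sinc (π * t) * (π * |t|) = |sin (π * t)| := by
    rw [← hπt, ← abs_of_nonneg (a := sinc (π * t)) (by linarith), ← abs_mul,
      sinc_of_ne_zero (mul_ne_zero pi_ne_zero h0), div_mul_cancel₀ _ (mul_ne_zero pi_ne_zero h0)]
  rw [sincWeight, max_eq_right hsinc, ← mul_rpow (by linarith) (by positivity), habs,
    rpow_neg (abs_nonneg _)]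

lemma exists_isBoundedHolder_one_sincWeight {σ : ℝ} (hσ : 0 ≤ σ) :
    ∃ L, IsBoundedHolder (sincWeight σ) 1 ((1 / 4) ^ (-σ)) L := by
  have hmem (t : ℝ) : max (1 / 4) (sinc (π * t)) ∈ Icc (1 / 4) 1 :=
    ⟨le_max_left _ _, max_le (by norm_num) (sinc_le_one _)⟩
  obtain ⟨C, hC, hlip⟩ := exists_abs_rpow_sub_rpow_le (-σ) (by norm_num : (0 : ℝ) < 1 / 4) 1
  refine ⟨C * π, ⟨fun t => ?_, fun s t => ?_⟩⟩
  · rw [sincWeight, abs_of_nonneg (rpow_nonneg (le_trans (by norm_num) (hmem t).1) _)]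
    exact rpow_le_rpow_of_nonpos (by norm_num) (hmem t).1 (neg_nonpos.2 hσ)
  · calc |sincWeight σ s - sincWeight σ t|
        ≤ C * |max (1 / 4) (sinc (π * s)) - max (1 / 4) (sinc (π * t))| :=
          hlip _ (hmem s) _ (hmem t)
      _ ≤ C * |sinc (π * s) - sinc (π * t)| := by
          refine mul_le_mul_of_nonneg_left ?_ hC
          rw [max_comm, max_comm (1 / 4)]
          exact abs_max_sub_max_le_abs _ _ _
      _ ≤ C * |π * s - π * t| := mul_le_mul_of_nonneg_left (abs_sinc_sub_sinc_le _ _) hC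
      _ = C * π * |s - t| ^ (1 : ℝ) := by
          rw [← mul_sub, abs_mul, abs_of_pos pi_pos, rpow_one, mul_assoc]

/-- The trapezoidal cutoff, equal to `1` for `|t| ≤ 1 / 3` and to `0` for `|t| ≥ 2 / 3`; its
integer translates form a partition of unity. -/
noncomputable def trapezoid (t : ℝ) : ℝ := max 0 (min 1 (2 - 3 * |t|))

lemma trapezoid_eq_zero {t : ℝ} (ht : 2 / 3 ≤ |t|) : trapezoid t = 0 :=
  max_eq_left ((min_le_right _ _).trans (by linarith))

lemma trapezoid_zero : trapezoid 0 = 1 := by simp [trapezoid]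

lemma trapezoid_neg (t : ℝ) : trapezoid (-t) = trapezoid t := by
  rw [trapezoid, abs_neg, trapezoid]

lemma isBoundedHolder_one_trapezoid : IsBoundedHolder trapezoid 1 1 3 where
  abs_apply_le t := by
    rw [abs_of_nonneg (le_max_left _ _)]
    exact max_le zero_le_one (min_le_left _ _)
  abs_sub_le s t := by
    calc |trapezoid s - trapezoid t| ≤ |min 1 (2 - 3 * |s|) - min 1 (2 - 3 * |t|)| := by
          rw [trapezoid, trapezoid, max_comm 0, max_comm 0]
          exact abs_max_sub_max_le_abs _ _ _
      _ ≤ |2 - 3 * |s| - (2 - 3 * |t|)| := by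
          simpa using abs_min_sub_min_le_max 1 (2 - 3 * |s|) 1 (2 - 3 * |t|)
      _ = 3 * |(|t| - |s|)| := by
          rw [sub_sub_sub_cancel_left, ← mul_sub, abs_mul, abs_of_pos (by norm_num : (0 : ℝ) < 3)]
      _ ≤ 3 * |s - t| ^ (1 : ℝ) := by
          rw [rpow_one, abs_sub_comm s t]
          exact mul_le_mul_of_nonneg_left (abs_abs_sub_abs_le_abs_sub t s) zero_le_three

lemma trapezoid_add_trapezoid_sub_one {t : ℝ} (h0 : 0 ≤ t) (h1 : t ≤ 1) :
    trapezoid t + trapezoid (t - 1) = 1 := by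
  rw [trapezoid, trapezoid, abs_of_nonneg h0, abs_of_nonpos (by linarith : t - 1 ≤ 0)]
  grind

lemma hasSum_trapezoid_add_intCast (t : ℝ) : HasSum (fun d : ℤ => trapezoid (t + d)) 1 := by
  have hpair : ∑ d ∈ {-⌊t⌋, -⌊t⌋ - 1}, trapezoid (t + d) = 1 := by
    rw [Finset.sum_pair (by lia), ← trapezoid_add_trapezoid_sub_one (Int.fract_nonneg t)
      (Int.fract_lt_one t).le, Int.fract]
    push_cast
    ring_nf
  rw [← hpair]
  refine hasSum_sum_of_ne_finset_zero fun d hd => trapezoid_eq_zero ?_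
  simp only [Finset.mem_insert, Finset.mem_singleton, not_or] at hd
  have hd' : d ≤ -⌊t⌋ - 2 ∨ -⌊t⌋ + 1 ≤ d := by lia
  rcases hd' with h | h
  · have hcast : (d : ℝ) ≤ -⌊t⌋ - 2 := by exact_mod_cast h
    rw [abs_of_nonpos (by linarith [Int.lt_floor_add_one t])]
    linarith [Int.lt_floor_add_one t]
  · have hcast : -(⌊t⌋ : ℝ) + 1 ≤ d := by exact_mod_cast h
    rw [abs_of_nonneg (by linarith [Int.floor_le t])]
    linarith [Int.floor_le t]

lemma apply_abs_sub_round {G : Type*} {f : ℝ → G} (hper : Function.Periodic f 1)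
    (heven : Function.Even f) (t : ℝ) : f |t - round t| = f t := by
  have hround : f (t - round t) = f t := by simpa using hper.sub_int_mul_eq (round t) (x := t)
  rcases abs_choice (t - round t) with h | h
  · rw [h, hround]
  · rw [h, heven, hround]

lemma abs_abs_sub_round_sub_le (s t : ℝ) :
    |(|s - round s| - |t - round t|)| ≤ |s - t| := by
  rw [← UnitAddCircle.norm_eq, ← UnitAddCircle.norm_eq]
  calc _ ≤ ‖((s - t : ℝ) : UnitAddCircle)‖ := abs_norm_sub_norm_le _ _
    _ ≤ |s - t| := by
      rw [UnitAddCircle.norm_eq]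
      simpa using round_le (s - t) 0

lemma isBoundedHolder_of_periodic_of_even {f : ℝ → ℝ} {α L : ℝ} (hper : Function.Periodic f 1)
    (heven : Function.Even f) (hα : 0 ≤ α) (hL : 0 ≤ L)
    (hf : ∀ s ∈ Icc (0 : ℝ) (1 / 2), ∀ t ∈ Icc (0 : ℝ) (1 / 2), |f s - f t| ≤ L * |s - t| ^ α) :
    IsBoundedHolder f α (|f 0| + L) L where
  abs_apply_le t := by
    have hmem : |t - round t| ∈ Icc (0 : ℝ) (1 / 2) := ⟨abs_nonneg _, abs_sub_round t⟩
    have hpow : |(|t - round t| - 0)| ^ α ≤ 1 := by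
      rw [sub_zero, abs_abs]
      exact rpow_le_one (abs_nonneg _) (hmem.2.trans (by norm_num)) hα
    have hle := hf _ hmem 0 ⟨le_rfl, by norm_num⟩
    rw [apply_abs_sub_round hper heven] at hle
    linarith [abs_sub_abs_le_abs_sub (f t) (f 0), mul_le_of_le_one_right hL hpow]
  abs_sub_le s t := by
    rw [← apply_abs_sub_round hper heven s, ← apply_abs_sub_round hper heven t]
    refine (hf _ ⟨abs_nonneg _, abs_sub_round s⟩ _ ⟨abs_nonneg _, abs_sub_round t⟩).trans ?_
    exact mul_le_mul_of_nonneg_left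
      (rpow_le_rpow (abs_nonneg _) (abs_abs_sub_round_sub_le s t) hα) hL

/-- The cutoff weight attached to `f`: the product of `f t / |sin (π t)| ^ σ` and the trapezoidal
cutoff, with its singularity `(π|t|) ^ (-σ)` removed. -/
noncomputable def regularPart (f : ℝ → ℝ) (σ t : ℝ) : ℝ := trapezoid t * (f t * sincWeight σ t)

lemma regularPart_zero (f : ℝ → ℝ) (σ : ℝ) : regularPart f σ 0 = f 0 := by
  rw [regularPart, trapezoid_zero, sincWeight_zero, one_mul, mul_one]

lemma exists_isCutoffWeight_regularPart {f : ℝ → ℝ} {σ α M L : ℝ} (hσ : 0 ≤ σ) (hα : 0 ≤ α)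
    (hα1 : α ≤ 1) (hf : IsBoundedHolder f α M L) (heven : Function.Even f) :
    ∃ M' L', IsCutoffWeight (regularPart f σ) α M' L' := by
  obtain ⟨K, hK⟩ := exists_isBoundedHolder_one_sincWeight hσ
  exact ⟨_, _, { toIsBoundedHolder :=
    (isBoundedHolder_one_trapezoid.of_exponent_le hα hα1).mul (hf.mul (hK.of_exponent_le hα hα1))
                 eq_zero t ht := by rw [regularPart, trapezoid_eq_zero ht, zero_mul]
                 even t := by
                   rw [regularPart, trapezoid_neg, heven, sincWeight_neg, regularPart] }⟩

/-- One factor of the summand of the tensor product sum. -/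
noncomputable def sinQuotient (f : ℝ → ℝ) (σ t : ℝ) : ℝ := f t / |sin (π * t)| ^ σ

lemma sinQuotient_zero (f : ℝ → ℝ) {σ : ℝ} (hσ : σ ≠ 0) : sinQuotient f σ 0 = 0 := by
  rw [sinQuotient, mul_zero, sin_zero, abs_zero, zero_rpow hσ, div_zero]

lemma sinQuotient_add_intCast {f : ℝ → ℝ} (hper : Function.Periodic f 1) (σ t : ℝ) (d : ℤ) :
    sinQuotient f σ (t + d) = sinQuotient f σ t := by
  have hf : f (t + d) = f t := by simpa using hper.int_mul d t
  have hsin : |sin (π * (t + d))| = |sin (π * t)| := by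
    rw [mul_add, mul_comm π (d : ℝ), sin_add_int_mul_pi, abs_mul, abs_zpow, abs_neg, abs_one,
      one_zpow, one_mul]
  rw [sinQuotient, hf, hsin, sinQuotient]

lemma hasSum_trapezoid_mul_sinQuotient {f : ℝ → ℝ} (hper : Function.Periodic f 1) (σ t : ℝ) :
    HasSum (fun d : ℤ => trapezoid (t + d) * sinQuotient f σ (t + d)) (sinQuotient f σ t) := by
  simpa only [sinQuotient_add_intCast hper, one_mul] using
    (hasSum_trapezoid_add_intCast t).mul_right (sinQuotient f σ t)

lemma trapezoid_mul_sinQuotient (f : ℝ → ℝ) {σ : ℝ} (hσ : σ ≠ 0) (t : ℝ) :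
    trapezoid t * sinQuotient f σ t = regularPart f σ t * (π * |t|) ^ (-σ) := by
  rcases eq_or_ne t 0 with rfl | h0
  · rw [sinQuotient_zero f hσ, abs_zero, mul_zero, mul_zero, zero_rpow (neg_ne_zero.2 hσ), mul_zero]
  · rw [regularPart, sinQuotient]
    rcases le_total (2 / 3) |t| with h | h
    · rw [trapezoid_eq_zero h, zero_mul, zero_mul, zero_mul]
    · rw [mul_assoc, mul_assoc, sincWeight_mul_rpow σ h0 h, div_eq_mul_inv]

lemma tsum_eq_sum_range_tsum_add_mul {G : Type*} [AddCommGroup G] [UniformSpace G]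
    [IsUniformAddGroup G] [CompleteSpace G] [T2Space G] {u : ℤ → G} (hu : Summable u) (N : ℕ)
    [NeZero N] : ∑' c, u c = ∑ m ∈ Finset.range N, ∑' k : ℤ, u (m + N * k) := by
  let e : Fin N × ℤ ≃ ℤ := (Equiv.prodComm _ _).trans (Int.divModEquiv N).symm
  have he (m : Fin N) (k : ℤ) : e (m, k) = m + N * k := by
    rw [add_comm, mul_comm]
    rfl
  have hue : Summable fun p => u (e p) := e.summable_iff.2 hu
  rw [← e.tsum_eq, hue.tsum_prod, tsum_fintype]
  simp only [he]
  exact Fin.sum_univ_eq_sum_range (fun m => ∑' k : ℤ, u (m + N * k)) N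

lemma summable_mul_add_intCast {g : ℝ → ℝ} (hg : ∀ t, 1 ≤ |t| → g t = 0) (N : ℕ) [NeZero N]
    (A : ℤ) :
    Summable fun l : ℤ × ℤ => g (l.1 / N) * g (A * l.1 / N + l.2) := by
  have hN : (0 : ℝ) < N := Nat.cast_pos.2 (NeZero.pos N)
  refine summable_of_hasFiniteSupport
    (((finite_Icc (-N : ℤ) N).prod (finite_Icc (-(|A| + 1)) (|A| + 1))).subset ?_)
  rintro ⟨c, d⟩ hl
  have hc : |(c : ℝ) / N| < 1 := not_le.1 fun h => left_ne_zero_of_mul hl (hg _ h)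
  have hd : |(A : ℝ) * c / N + d| < 1 := not_le.1 fun h => right_ne_zero_of_mul hl (hg _ h)
  have hcN : |(c : ℝ)| ≤ N := by
    rw [abs_div, abs_of_pos hN, div_lt_one hN] at hc
    exact hc.le
  have hdA : |(d : ℝ)| ≤ |(A : ℝ)| + 1 := by
    calc |(d : ℝ)| = |((A : ℝ) * c / N + d) - A * (c / N)| := by ring_nf
      _ ≤ |(A : ℝ) * c / N + d| + |(A : ℝ) * (c / N)| := abs_sub _ _
      _ ≤ |(A : ℝ)| + 1 := by
          rw [abs_mul]
          linarith [mul_le_of_le_one_right (abs_nonneg (A : ℝ)) hc.le]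
  exact ⟨abs_le.1 (by exact_mod_cast hcN), abs_le.1 (by exact_mod_cast hdA)⟩

/-- Summing over the second coordinate replaces one factor `g` by its periodization `G`; by
periodicity, summing over the first coordinate within a residue class mod `N` does the same for the
other factor. -/
lemma tsum_mul_add_intCast_eq_sum_range {g G : ℝ → ℝ} (hg : ∀ t, 1 ≤ |t| → g t = 0)
    (hG : Function.Periodic G 1) (hsum : ∀ t, HasSum (fun d : ℤ => g (t + d)) (G t)) (N : ℕ)
    [NeZero N] (A : ℤ) :
    ∑' l : ℤ × ℤ, g (l.1 / N) * g (A * l.1 / N + l.2) =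
      ∑ m ∈ Finset.range N, G (m / N) * G (A * m / N) := by
  have hN : (N : ℝ) ≠ 0 := NeZero.ne _
  have hs := summable_mul_add_intCast hg N A
  have hs' : Summable fun c : ℤ => g (c / N) * G (A * c / N) := by
    simpa only [tsum_mul_left, (hsum _).tsum_eq] using hs.prod
  have hG' (m : ℕ) (k : ℤ) : G (A * (m + N * k : ℤ) / N) = G (A * m / N) := by
    have hshift : (A : ℝ) * (m + N * k : ℤ) / N = A * m / N + (A * k : ℤ) * 1 := by
      push_cast
      field_simp
    rw [hshift, hG.int_mul]
  rw [hs.tsum_prod]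
  simp only [tsum_mul_left, (hsum _).tsum_eq]
  rw [tsum_eq_sum_range_tsum_add_mul hs' N]
  refine Finset.sum_congr rfl fun m _ => ?_
  simp only [hG', tsum_mul_right]
  rw [← (hsum (m / N)).tsum_eq]
  congr! 4 with k
  push_cast
  field_simp

lemma goldenRatio_pow_mul_coordU_add (n : ℕ) (l : ℤ × ℤ) :
    φ ^ (n + 1) * coordU l + ψ ^ (n + 1) * coordS l =
      √5 * (Nat.fib n * l.1 + Nat.fib (n + 1) * l.2) := by
  rw [coordU_apply, coordS_apply, coe_fib_eq, coe_fib_eq]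
  rw [mul_add, ← mul_assoc, ← mul_assoc, mul_div_cancel₀ _ (by positivity),
    mul_div_cancel₀ _ (by positivity)]
  linear_combination (l.1 * (ψ ^ n - φ ^ n)) * goldenRatio_mul_goldenConj

lemma rpow_neg_pi_mul_abs_div (σ x : ℝ) {T : ℝ} (hT : 0 < T) :
    (π * |x / T|) ^ (-σ) = T ^ σ / π ^ σ * |x| ^ (-σ) := by
  rw [abs_div, abs_of_pos hT, mul_rpow pi_pos.le (by positivity), div_rpow (abs_nonneg _) hT.le,
    rpow_neg pi_pos.le, rpow_neg hT.le, div_inv_eq_mul]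
  ring

lemma trapezoid_mul_sinQuotient_eq_latticeTerm (f : ℝ → ℝ) {σ : ℝ} (hσ : σ ≠ 0) (n : ℕ)
    (l : ℤ × ℤ) :
    trapezoid (l.1 / Nat.fib (n + 1)) * sinQuotient f σ (l.1 / Nat.fib (n + 1)) *
        (trapezoid (Nat.fib n * l.1 / Nat.fib (n + 1) + l.2) *
          sinQuotient f σ (Nat.fib n * l.1 / Nat.fib (n + 1) + l.2)) =
      (Nat.fib (n + 1) : ℝ) ^ σ * (5 ^ (σ / 2) / π ^ (2 * σ)) *
        latticeTerm (regularPart f σ) σ (n + 1) l := by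
  have hT := goldenRatio_pow_sub_goldenConj_pow_pos n.succ_ne_zero
  have hfib : φ ^ (n + 1) - ψ ^ (n + 1) = √5 * Nat.fib (n + 1) := by
    rw [coe_fib_eq]
    field_simp
  have hF : (Nat.fib (n + 1) : ℝ) ≠ 0 := (Nat.cast_pos.2 (Nat.fib_pos.2 n.succ_pos)).ne'
  have hs : (l.1 : ℝ) / Nat.fib (n + 1) =
      (coordU l + coordS l) / (φ ^ (n + 1) - ψ ^ (n + 1)) := by
    rw [coordU_add_coordS, hfib]
    field_simp
  have ht : (Nat.fib n : ℝ) * l.1 / Nat.fib (n + 1) + l.2 =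
      (φ ^ (n + 1) * coordU l + ψ ^ (n + 1) * coordS l) /
      (φ ^ (n + 1) - ψ ^ (n + 1)) := by
    rw [goldenRatio_pow_mul_coordU_add, hfib]
    field_simp
  have hpow : (φ ^ (n + 1) - ψ ^ (n + 1)) ^ σ = 5 ^ (σ / 2) * (Nat.fib (n + 1) : ℝ) ^ σ := by
    rw [hfib, mul_rpow (by positivity) (by positivity), sqrt_eq_rpow, ← rpow_mul (by norm_num)]
    ring_nf
  have hπ : π ^ (2 * σ) = π ^ σ * π ^ σ := by rw [two_mul, rpow_add pi_pos]
  rw [trapezoid_mul_sinQuotient f hσ, trapezoid_mul_sinQuotient f hσ, latticeTerm, hs, ht,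
    rpow_neg_pi_mul_abs_div σ _ hT, rpow_neg_pi_mul_abs_div σ _ hT, hπ, hpow]
  ring

/-- The normalized sum of `f t / |sin (π t)| ^ σ` over both coordinates of the points of the `n`-th
Fibonacci lattice other than the origin. -/
noncomputable def fibonacciSum (f : ℝ → ℝ) (σ : ℝ) (n : ℕ) : ℝ :=
  1 / (Nat.fib n : ℝ) ^ σ * ∑ m ∈ Finset.Ico 1 (Nat.fib n),
    sinQuotient f σ (m / Nat.fib n) * sinQuotient f σ (Nat.fib (n - 1) * m / Nat.fib n)

lemma fibonacciSum_eq_tsum_latticeTerm {f : ℝ → ℝ} (hper : Function.Periodic f 1) {σ : ℝ}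
    (hσ : σ ≠ 0) {n : ℕ} (hn : n ≠ 0) :
    fibonacciSum f σ n =
      5 ^ (σ / 2) / π ^ (2 * σ) * ∑' l, latticeTerm (regularPart f σ) σ n l := by
  obtain ⟨n, rfl⟩ := Nat.exists_eq_add_one_of_ne_zero hn
  have hF : 0 < Nat.fib (n + 1) := Nat.fib_pos.2 n.succ_pos
  have : NeZero (Nat.fib (n + 1)) := ⟨hF.ne'⟩
  have hpow : (Nat.fib (n + 1) : ℝ) ^ σ ≠ 0 := (rpow_pos_of_pos (Nat.cast_pos.2 hF) _).ne'
  have hperQ : Function.Periodic (sinQuotient f σ) 1 := fun t => by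
    simpa using sinQuotient_add_intCast hper σ t 1
  have hunfold := tsum_mul_add_intCast_eq_sum_range
    (g := fun t => trapezoid t * sinQuotient f σ t)
    (fun t ht => by rw [trapezoid_eq_zero (by linarith), zero_mul]) hperQ
    (hasSum_trapezoid_mul_sinQuotient hper σ) (Nat.fib (n + 1)) (Nat.fib n)
  simp only [Int.cast_natCast, trapezoid_mul_sinQuotient_eq_latticeTerm f hσ n,
    tsum_mul_left] at hunfold
  rw [Finset.range_eq_Ico, Finset.sum_eq_sum_Ico_succ_bot hF, Nat.cast_zero, zero_div,
    sinQuotient_zero f hσ, zero_mul, zero_add, zero_add, mul_assoc] at hunfold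
  rw [fibonacciSum, Nat.add_sub_cancel, one_div, inv_mul_eq_iff_eq_mul₀ hpow, hunfold]

theorem exists_abs_fibonacciSum_sub_linear_le {f : ℝ → ℝ} {σ α β M L : ℝ}
    (hper : Function.Periodic f 1) (heven : Function.Even f) (hf : IsBoundedHolder f α M L)
    (hβ : 0 < β) (hβα : β ≤ α) (hα1 : α ≤ 1) (hβσ : 1 < σ - β / 2) :
    ∃ D K, 0 ≤ K ∧ ∀ n : ℕ, 3 ≤ n →
      |fibonacciSum f σ n -
          2 * f 0 ^ 2 * 5 ^ (σ / 2) / π ^ (2 * σ) * (∑' i, 1 / eta (i + 1) ^ σ) * n - D| ≤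
        K * ((n + 1) * (φ⁻¹ ^ n) ^ (β / 2)) := by
  obtain ⟨M', L', H⟩ := exists_isCutoffWeight_regularPart (σ := σ) (by linarith)
    (hβ.le.trans hβα) hα1 hf heven
  obtain ⟨D, K, hK, hlattice⟩ := H.exists_abs_tsum_latticeTerm_sub_linear_le hβ hβα hα1 hβσ
  have hP : 0 < (5 : ℝ) ^ (σ / 2) / π ^ (2 * σ) := by positivity
  refine ⟨5 ^ (σ / 2) / π ^ (2 * σ) * D, 5 ^ (σ / 2) / π ^ (2 * σ) * K, by positivity,
    fun n hn => ?_⟩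
  have hlattice := mul_le_mul_of_nonneg_left (hlattice n hn) hP.le
  rw [← abs_of_pos hP, ← abs_mul, abs_of_pos hP, regularPart_zero] at hlattice
  rw [fibonacciSum_eq_tsum_latticeTerm hper (by linarith) (by lia)]
  simp only [one_div, ← rpow_neg (eta_succ_pos _).le]
  calc _ = _ := by congr 1; ring
    _ ≤ _ := hlattice
    _ = _ := by ring

lemma inv_goldenRatio_pow_rpow (n : ℕ) (x : ℝ) :
    (φ⁻¹ ^ n) ^ (x / 2) = (phi ^ (x * n / 2))⁻¹ := by
  rw [phi_eq_goldenRatio, inv_pow, inv_rpow (by positivity), ← rpow_natCast_mul goldenRatio_pos.le]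
  ring_nf

end

/-- Precise asymptotics of tensor product sums over Fibonacci lattices:
the sum behaves like `C·n + D + O(n²/φ^{min{α,σ−1}n/2})` with
`C = 2 f(0)² 5^{σ/2} π^{−2σ} Σ_{i≥1} η_i^{−σ}`. -/
theorem fibonacci_lattice_asymptotics
    (σ : ℝ) (hσ : 1 < σ) (f : ℝ → ℝ)
    (hper : ∀ t : ℝ, f (t + 1) = f t)
    (hsym : ∀ t : ℝ, f t = f (1 - t))
    (α : ℝ) (hα0 : 0 < α) (hα1 : α ≤ 1)
    (hHolder : ∃ L : ℝ, 0 ≤ L ∧ ∀ x ∈ Set.Ico (0 : ℝ) 1, ∀ y ∈ Set.Ico (0 : ℝ) 1,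
      |f x - f y| ≤ L * |x - y| ^ α) :
    ∃ D K : ℝ, 0 < K ∧ ∃ N₀ : ℕ, ∀ n : ℕ, N₀ ≤ n →
      |(1 / (Nat.fib n : ℝ) ^ σ) *
          ∑ m ∈ Finset.Ico 1 (Nat.fib n),
            f ((m : ℝ) / Nat.fib n) / |Real.sin (π * m / Nat.fib n)| ^ σ *
              (f ((Nat.fib (n - 1) : ℝ) * m / Nat.fib n) /
                |Real.sin (π * Nat.fib (n - 1) * m / Nat.fib n)| ^ σ)
        - (2 * f 0 ^ 2 * (5 : ℝ) ^ (σ / 2) / π ^ (2 * σ) * ∑' i : ℕ, 1 / eta (i + 1) ^ σ) * n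
        - D|
      ≤ K * (n : ℝ) ^ 2 / phi ^ (min α (σ - 1) * n / 2) := by
  have heven : Function.Even f := fun t => by rw [hsym, sub_neg_eq_add, add_comm, hper]
  obtain ⟨L, hL, hf⟩ := hHolder
  have hhalf : Set.Icc (0 : ℝ) (1 / 2) ⊆ Set.Ico 0 1 := Set.Icc_subset_Ico_right (by norm_num)
  have hβσ : min α (σ - 1) ≤ σ - 1 := min_le_right _ _
  obtain ⟨D, K, hK, hsum⟩ := exists_abs_fibonacciSum_sub_linear_le (σ := σ) hper heven
    (isBoundedHolder_of_periodic_of_even hper heven hα0.le hL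
      fun s hs t ht => hf s (hhalf hs) t (hhalf ht))
    (lt_min hα0 (sub_pos.2 hσ)) (min_le_left _ _) hα1 (by linarith)
  refine ⟨D, 2 * K + 1, by positivity, 3, fun n hn => ?_⟩
  have hn' : (n : ℝ) + 1 ≤ 2 * n ^ 2 := by exact_mod_cast (by nlinarith : n + 1 ≤ 2 * n ^ 2)
  have hsum := hsum n hn
  rw [inv_goldenRatio_pow_rpow] at hsum
  have hpow : 0 ≤ (phi ^ (min α (σ - 1) * n / 2))⁻¹ := by
    rw [phi_eq_goldenRatio]
    positivity
  simp only [fibonacciSum, sinQuotient, ← mul_div_assoc, ← mul_assoc] at hsum ⊢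
  calc _ ≤ _ := hsum
    _ ≤ K * (2 * n ^ 2) * (phi ^ (min α (σ - 1) * n / 2))⁻¹ := by gcongr
    _ ≤ (2 * K + 1) * (n : ℝ) ^ 2 / phi ^ (min α (σ - 1) * n / 2) := by
        rw [div_eq_mul_inv ((2 * K + 1) * _)]
        nlinarith [mul_nonneg (sq_nonneg (n : ℝ)) hpow]
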